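/- arXiv:2402.15574 — 4 statements merged into one kernel-verified Lean document; each statement's English description precedes it below -/
import Mathlib

section
/- Let (A, α, γ) be a graded C*-dynamical system with Z₂-crossed product 𝐀 = A ⋊_γ ℤ₂ carrying the extended dynamics 𝛂, and let β ∈ ℝ. Then any (𝛂, β)-KMS state 𝛚 on 𝐀 restricts to a γ-invariant (α, β)-KMS state ω = 𝛚|_{A⊕0} on A. -/
open scoped InnerProductSpace ComplexOrder

noncomputable section

/-- A strongly continuous one-parameter group of *-automorphisms of a unital C*-algebra. -/
structure Dynamics (A : Type*) [CStarAlgebra A] where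
  α : ℝ → A ≃⋆ₐ[ℂ] A
  α_zero : ∀ a, α 0 a = a
  α_add : ∀ s t a, α (s + t) a = α s (α t a)
  α_cont : ∀ a, Continuous fun t => α t a

variable {A : Type*} [CStarAlgebra A]

/-- `f` is the entire analytic extension of `t ↦ α_t a`; an element admitting such an
extension is an entire analytic element for the dynamics. -/
def Dynamics.IsAnalyticExt (d : Dynamics A) (a : A) (f : ℂ → A) : Prop :=
  Differentiable ℂ f ∧ ∀ t : ℝ, f (t : ℂ) = d.α t a

/-- A state: positive normalized linear functional. -/
def IsState (ω : A → ℂ) : Prop :=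
  IsLinearMap ℂ ω ∧ (∀ a : A, 0 ≤ ω (star a * a)) ∧ ω 1 = 1

/-- The `(α, β)`-KMS condition: `ω (a * α_{iβ}(b)) = ω (b * a)` for entire analytic `a, b`. -/
def Dynamics.IsKMS (d : Dynamics A) (β : ℝ) (ω : A → ℂ) : Prop :=
  IsState ω ∧ ∀ a b : A, ∀ fa fb : ℂ → A, d.IsAnalyticExt a fa → d.IsAnalyticExt b fb →
    ω (a * fb (Complex.I * β)) = ω (b * a)

/-- A graded C*-dynamical system: dynamics plus a commuting involutive grading. -/
structure GradedDyn (A : Type*) [CStarAlgebra A] extends Dynamics A where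
  γ : A ≃⋆ₐ[ℂ] A
  γ_invol : ∀ a, γ (γ a) = a
  γ_comm : ∀ t a, γ (α t a) = α t (γ a)

/-- The `γ`-twisted `(α, β)`-KMS condition: `ρ (a * α_{iβ}(b)) = ρ (b * γ a)`. -/
def Dynamics.IsTwistedKMS (d : Dynamics A) (γ : A ≃⋆ₐ[ℂ] A) (β : ℝ) (ρ : A → ℂ) : Prop :=
  IsLinearMap ℂ ρ ∧ ∀ a b : A, ∀ fa fb : ℂ → A, d.IsAnalyticExt a fa → d.IsAnalyticExt b fb →
    ρ (a * fb (Complex.I * β)) = ρ (b * γ a)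

/-- Hermitian functional: `ρ(a*) = conj (ρ a)`. -/
def IsHermitian (ρ : A → ℂ) : Prop := ∀ a, ρ (star a) = starRingEnd ℂ (ρ a)

/-- `ρ` is dominated by `ω`: `|ρ(a* b)|² ≤ ω(a* a) ω(b* b)`. -/
def Dominated (ω ρ : A → ℂ) : Prop :=
  ∀ a b : A, (‖ρ (star a * b)‖ : ℂ) ^ 2 ≤ ω (star a * a) * ω (star b * b)

/-- The set `F_β(A, α, γ, ω)`: hermitian `γ`-twisted `(α,β)`-KMS functionals dominated by `ω`. -/
def TwistedKMSDom (d : Dynamics A) (γ : A ≃⋆ₐ[ℂ] A) (β : ℝ) (ω ρ : A → ℂ) : Prop :=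
  d.IsTwistedKMS γ β ρ ∧ IsHermitian ρ ∧ Dominated ω ρ

/-- Product of the `ℤ₂`-crossed product `A ⋊_γ ℤ₂` realized on `A ⊕ A`. -/
def cpMul (γ : A ≃⋆ₐ[ℂ] A) (p q : A × A) : A × A :=
  (p.1 * q.1 + p.2 * γ q.2, p.1 * q.2 + p.2 * γ q.1)

/-- Involution of the crossed product. -/
def cpStar (γ : A ≃⋆ₐ[ℂ] A) (p : A × A) : A × A := (star p.1, γ (star p.2))

/-- Unit of the crossed product. -/
def cpOne : A × A := (1, 0)

/-- A state on the crossed product. -/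
def cpIsState (γ : A ≃⋆ₐ[ℂ] A) (W : A × A → ℂ) : Prop :=
  IsLinearMap ℂ W ∧ (∀ p : A × A, 0 ≤ W (cpMul γ (cpStar γ p) p)) ∧ W (cpOne : A × A) = 1

/-- Entire analytic extension for the componentwise extended dynamics `𝛂` on `A ⊕ A`. -/
def cpIsAnalyticExt (d : Dynamics A) (p : A × A) (f : ℂ → A × A) : Prop :=
  Differentiable ℂ f ∧ ∀ t : ℝ, f (t : ℂ) = (d.α t p.1, d.α t p.2)

/-- `(𝛂, β)`-KMS states of the crossed product `A ⋊_γ ℤ₂`. -/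
def cpIsKMS (d : Dynamics A) (γ : A ≃⋆ₐ[ℂ] A) (β : ℝ) (W : A × A → ℂ) : Prop :=
  cpIsState γ W ∧ ∀ p q : A × A, ∀ fp fq : ℂ → A × A,
    cpIsAnalyticExt d p fp → cpIsAnalyticExt d q fq →
    W (cpMul γ p (fq (Complex.I * β))) = W (cpMul γ q p)

/-!
Apply the KMS condition to the odd elements `(0, a)` and `(0, 1)`. The latter is fixed by the
dynamics, so that `W` agrees on `(0, a)(0, 1) = (a, 0)` and `(0, 1)(0, a) = (γ a, 0)`. The
condition is only available for entire analytic `a`, but states are continuous and analytic elements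
are dense: averaging `s ↦ α_s a` over a centred Gaussian of variance `v` gives an element tending to
`a` as `v → 0`, and its orbit extends to `ℂ` because, by the Cameron–Martin formula, translating the
average by `t` amounts to inserting the density `exp ((t s - t² / 2) / v)`, which is entire in `t`.
-/

open MeasureTheory ProbabilityTheory Filter
open scoped NNReal Topology

section ExponentialIntegral

variable {Ω E : Type*} [MeasurableSpace Ω] [NormedAddCommGroup E] [NormedSpace ℂ E]

lemma norm_mul_cexp_mul_le {R : ℝ} {w : ℂ} (hw : ‖w‖ ≤ R) (x : ℝ) :
    ‖(x : ℂ) * Complex.exp (w * x)‖ ≤ Real.exp ((R + 1) * x) + Real.exp (-(R + 1) * x) := by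
  have habs : |x| ≤ Real.exp |x| := by linarith [Real.add_one_le_exp |x|]
  have hre : (w * x).re ≤ R * |x| := calc
    (w * x).re ≤ ‖w * x‖ := Complex.re_le_norm _
    _ = ‖w‖ * |x| := by rw [norm_mul, Complex.norm_real, Real.norm_eq_abs]
    _ ≤ R * |x| := by gcongr
  calc ‖(x : ℂ) * Complex.exp (w * x)‖
      = |x| * Real.exp (w * x).re := by
        rw [norm_mul, Complex.norm_real, Real.norm_eq_abs, Complex.norm_exp]
    _ ≤ Real.exp |x| * Real.exp (R * |x|) := by gcongr
    _ = Real.exp ((R + 1) * |x|) := by rw [← Real.exp_add]; ring_nf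
    _ ≤ Real.exp ((R + 1) * x) + Real.exp (-(R + 1) * x) := by
        rcases abs_choice x with hx | hx <;> rw [hx]
        · exact le_add_of_nonneg_right (Real.exp_nonneg _)
        · rw [mul_neg, ← neg_mul]
          exact le_add_of_nonneg_left (Real.exp_nonneg _)

theorem differentiable_integral_cexp_mul_smul {μ : Measure Ω} {X : Ω → ℝ} {F : Ω → E}
    (hX : AEMeasurable X μ)
    (hF : ∀ c : ℝ, Integrable (fun x => (Real.exp (c * X x) : ℂ) • F x) μ) :
    Differentiable ℂ fun w : ℂ => ∫ x, Complex.exp (w * X x) • F x ∂μ := by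
  intro w₀
  have hF_meas : AEStronglyMeasurable F μ := by simpa using (hF 0).aestronglyMeasurable
  have hX_meas : AEStronglyMeasurable (fun x => (X x : ℂ)) μ :=
    (Complex.measurable_ofReal.comp_aemeasurable hX).aestronglyMeasurable
  have hexp_meas (w : ℂ) : AEStronglyMeasurable (fun x => Complex.exp (w * X x)) μ :=
    Complex.continuous_exp.comp_aestronglyMeasurable (hX_meas.const_mul w)
  have hint : Integrable (fun x => Complex.exp (w₀ * X x) • F x) μ := by
    refine (hF w₀.re).norm.mono ((hexp_meas w₀).smul hF_meas) (.of_forall fun x => ?_)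
    simp [norm_smul, Complex.norm_exp]
  have hderiv_bound (x : Ω) (w : ℂ) (hw : w ∈ Metric.ball w₀ 1) :
      ‖((X x : ℂ) * Complex.exp (w * X x)) • F x‖ ≤
        ‖(Real.exp ((‖w₀‖ + 1 + 1) * X x) : ℂ) • F x‖ +
          ‖(Real.exp (-(‖w₀‖ + 1 + 1) * X x) : ℂ) • F x‖ := by
    have hw_norm : ‖w‖ ≤ ‖w₀‖ + 1 := by
      linarith [norm_le_norm_add_norm_sub w₀ w, mem_ball_iff_norm'.1 hw]
    simp only [norm_smul, Complex.norm_real, Real.norm_eq_abs, Real.abs_exp, ← add_mul]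
    gcongr
    exact norm_mul_cexp_mul_le hw_norm (X x)
  have hderiv (x : Ω) (w : ℂ) : HasDerivAt (fun w => Complex.exp (w * X x) • F x)
      (((X x : ℂ) * Complex.exp (w * X x)) • F x) w := by
    simpa [mul_comm] using ((hasDerivAt_mul_const (X x : ℂ)).cexp (x := w)).smul_const (F x)
  exact (hasDerivAt_integral_of_dominated_loc_of_deriv_le (Metric.ball_mem_nhds w₀ one_pos)
    (.of_forall fun w => (hexp_meas w).smul hF_meas) hint
    ((hX_meas.mul (hexp_meas w₀)).smul hF_meas) (.of_forall hderiv_bound)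
    ((hF _).norm.add (hF _).norm)
    (.of_forall fun x w _ => hderiv x w)).2.differentiableAt

end ExponentialIntegral

section GaussianIntegral

variable {E : Type*} [NormedAddCommGroup E] {F : ℝ → E} {M : ℝ}

lemma gaussianPDFReal_add_mean (m h : ℝ) (v : ℝ≥0) (x : ℝ) :
    gaussianPDFReal (m + h) v x =
      gaussianPDFReal m v x * Real.exp ((h * (x - m) - h ^ 2 / 2) / v) := by
  rw [gaussianPDFReal, gaussianPDFReal, mul_assoc _ (Real.exp _), ← Real.exp_add]
  ring_nf

theorem integral_gaussianReal_add_mean [NormedSpace ℝ E] (m h : ℝ) {v : ℝ≥0} (hv : v ≠ 0)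
    (F : ℝ → E) :
    ∫ x, F x ∂gaussianReal (m + h) v =
      ∫ x, Real.exp ((h * (x - m) - h ^ 2 / 2) / v) • F x ∂gaussianReal m v := by
  simp only [integral_gaussianReal_eq_integral_smul hv, gaussianPDFReal_add_mean, mul_smul]

lemma map_sqrt_mul_add_gaussianReal_zero_one (m : ℝ) (v : ℝ≥0) :
    (gaussianReal 0 1).map (fun x => √v * x + m) = gaussianReal m v := by
  change (gaussianReal 0 1).map ((· + m) ∘ (√v * ·)) = gaussianReal m v
  rw [← Measure.map_map (by fun_prop) (by fun_prop), gaussianReal_map_const_mul,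
    gaussianReal_map_add_const]
  congr 1
  · simp
  · ext; simp

theorem tendsto_integral_gaussianReal_nhds_zero [NormedSpace ℝ E] [CompleteSpace E] {m : ℝ}
    (hF : StronglyMeasurable F) (hbound : ∀ x, ‖F x‖ ≤ M) (hcont : ContinuousAt F m) :
    Tendsto (fun v : ℝ≥0 => ∫ x, F x ∂gaussianReal m v) (𝓝 0) (𝓝 (F m)) := by
  have hrescale (v : ℝ≥0) :
      ∫ x, F x ∂gaussianReal m v = ∫ x, F (√v * x + m) ∂gaussianReal 0 1 := by
    rw [← map_sqrt_mul_add_gaussianReal_zero_one,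
      integral_map_of_stronglyMeasurable (by fun_prop) hF]
  have hlim (x : ℝ) : Tendsto (fun v : ℝ≥0 => F (√v * x + m)) (𝓝 0) (𝓝 (F m)) := by
    have haffine : Tendsto (fun v : ℝ≥0 => √v * x + m) (𝓝 0) (𝓝 m) :=
      Continuous.tendsto' (by fun_prop) _ _ (by simp)
    exact hcont.tendsto.comp haffine
  have hconst : ∫ _, F m ∂gaussianReal 0 1 = F m := by simp
  rw [funext hrescale, ← hconst]
  exact tendsto_integral_filter_of_dominated_convergence (fun _ => M)
    (.of_forall fun v => (hF.comp_measurable (by fun_prop)).aestronglyMeasurable)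
    (.of_forall fun v => .of_forall fun x => hbound _) (integrable_const M)
    (.of_forall hlim)

variable [NormedSpace ℂ E]

lemma integrable_exp_mul_smul_gaussianReal (m : ℝ) (v : ℝ≥0) (hF : StronglyMeasurable F)
    (hbound : ∀ x, ‖F x‖ ≤ M) (c : ℝ) :
    Integrable (fun x => (Real.exp (c * x) : ℂ) • F x) (gaussianReal m v) :=
  (integrable_exp_mul_gaussianReal c).ofReal.smul_bdd _ hF.aestronglyMeasurable
    (.of_forall hbound)

/-- The entire extension of the Gaussian average `t ↦ ∫ s, F (s + t) ∂gaussianReal 0 v` of a bounded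
function `F`. The argument is moved from `F` into the Cameron–Martin density, where it may be
complex. At `v = 0`, where `x / 0 = 0`, it is a constant function. -/
def gaussianSmoothing (v : ℝ≥0) (F : ℝ → E) (z : ℂ) : E :=
  ∫ s : ℝ, Complex.exp ((z * s - z ^ 2 / 2) / v) • F s ∂gaussianReal 0 v

lemma gaussianSmoothing_ofReal {v : ℝ≥0} (hv : v ≠ 0) (hF : StronglyMeasurable F) (t : ℝ) :
    gaussianSmoothing v F t = ∫ s, F (s + t) ∂gaussianReal 0 v := by
  have hdensity (s : ℝ) : Complex.exp (((t : ℂ) * s - (t : ℂ) ^ 2 / 2) / v) • F s =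
      Real.exp ((t * (s - 0) - t ^ 2 / 2) / v) • F s := by
    rw [← Complex.coe_smul, sub_zero]
    push_cast
    rfl
  simp only [gaussianSmoothing, hdensity]
  rw [← integral_gaussianReal_add_mean 0 t hv, ← gaussianReal_map_add_const,
    integral_map_of_stronglyMeasurable (by fun_prop) hF]

lemma differentiable_gaussianSmoothing (v : ℝ≥0) (hF : StronglyMeasurable F)
    (hbound : ∀ x, ‖F x‖ ≤ M) : Differentiable ℂ (gaussianSmoothing v F) := by
  have hfactor (z : ℂ) : gaussianSmoothing v F z = Complex.exp (-(z ^ 2 / 2 / v)) •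
      ∫ s : ℝ, Complex.exp (z / v * s) • F s ∂gaussianReal 0 v := by
    rw [gaussianSmoothing, ← integral_smul]
    congr with s
    rw [smul_smul, ← Complex.exp_add]
    ring_nf
  have hentire : Differentiable ℂ fun w : ℂ =>
      ∫ s : ℝ, Complex.exp (w * s) • F s ∂gaussianReal 0 v :=
    differentiable_integral_cexp_mul_smul aemeasurable_id
      (integrable_exp_mul_smul_gaussianReal 0 v hF hbound)
  rw [funext hfactor]
  exact Differentiable.smul (by fun_prop) (hentire.comp (differentiable_id.div_const (v : ℂ)))

end GaussianIntegral

section AnalyticElements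

/-- The set `A_α` of entire analytic elements of a dynamics. -/
def analyticElements (d : Dynamics A) : Set A := {a | ∃ f, d.IsAnalyticExt a f}

lemma isAnalyticExt_zero (d : Dynamics A) : d.IsAnalyticExt 0 fun _ => 0 :=
  ⟨differentiable_const 0, fun t => (map_zero (d.α t)).symm⟩

lemma isAnalyticExt_one (d : Dynamics A) : d.IsAnalyticExt 1 fun _ => 1 :=
  ⟨differentiable_const 1, fun t => (map_one (d.α t)).symm⟩

theorem isAnalyticExt_gaussianSmoothing (d : Dynamics A) (a : A) {v : ℝ≥0} (hv : v ≠ 0) :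
    d.IsAnalyticExt (∫ s, d.α s a ∂gaussianReal 0 v)
      (gaussianSmoothing v fun s => d.α s a) := by
  have hmeas : StronglyMeasurable fun s => d.α s a := (d.α_cont a).stronglyMeasurable
  have hbound (s : ℝ) : ‖d.α s a‖ ≤ ‖a‖ := (StarAlgEquiv.norm_map (d.α s) a).le
  have hint : Integrable (fun s => d.α s a) (gaussianReal 0 v) :=
    .of_bound hmeas.aestronglyMeasurable ‖a‖ (.of_forall hbound)
  refine ⟨differentiable_gaussianSmoothing v hmeas hbound, fun t => ?_⟩
  let αt : A →L[ℂ] A := ⟨(d.α t : A →ₗ[ℂ] A), (StarAlgEquiv.isometry (d.α t)).continuous⟩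
  calc gaussianSmoothing v (fun s => d.α s a) t
      = ∫ s, d.α (s + t) a ∂gaussianReal 0 v := gaussianSmoothing_ofReal hv hmeas t
    _ = ∫ s, αt (d.α s a) ∂gaussianReal 0 v := by simp_rw [add_comm _ t, d.α_add]; rfl
    _ = d.α t (∫ s, d.α s a ∂gaussianReal 0 v) := αt.integral_comp_comm hint

theorem dense_analyticElements (d : Dynamics A) : Dense (analyticElements d) := by
  intro a
  have hlim : Tendsto (fun v : ℝ≥0 => ∫ s, d.α s a ∂gaussianReal 0 v) (𝓝[>] 0) (𝓝 a) := by
    have := tendsto_integral_gaussianReal_nhds_zero (m := 0) (d.α_cont a).stronglyMeasurable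
      (fun s => (StarAlgEquiv.norm_map (d.α s) a).le) (d.α_cont a).continuousAt
    rw [d.α_zero] at this
    exact this.mono_left nhdsWithin_le_nhds
  refine mem_closure_of_tendsto hlim (eventually_mem_nhdsWithin.mono fun v hv => ?_)
  exact ⟨_, isAnalyticExt_gaussianSmoothing d a (ne_of_gt hv)⟩

end AnalyticElements

section States

theorem IsState.continuous {ω : A → ℂ} (hω : IsState ω) : Continuous ω := by
  let _ := CStarAlgebra.spectralOrder A
  have := CStarAlgebra.spectralOrderedRing A
  let ωₚ : A →ₚ[ℂ] ℂ := .mk₀ (hω.1.mk' ω) fun a ha => by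
    obtain ⟨b, rfl⟩ := CStarAlgebra.nonneg_iff_eq_star_mul_self.1 ha
    exact hω.2.1 b
  exact map_continuous ωₚ

variable {γ : A ≃⋆ₐ[ℂ] A} {W : A × A → ℂ}

lemma cpIsState.isState_restrict (hW : cpIsState γ W) : IsState fun a => W (a, 0) := by
  obtain ⟨hlin, hpos, hone⟩ := hW
  refine ⟨(hlin.mk' W ∘ₗ LinearMap.inl ℂ A A).isLinear, fun a => ?_, hone⟩
  simpa [cpMul, cpStar] using hpos (a, 0)

variable {d : Dynamics A} {β : ℝ}

lemma cpIsAnalyticExt_prodMk {a b : A} {f g : ℂ → A} (hf : d.IsAnalyticExt a f)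
    (hg : d.IsAnalyticExt b g) : cpIsAnalyticExt d (a, b) fun z => (f z, g z) :=
  ⟨hf.1.prodMk hg.1, fun t => Prod.ext (hf.2 t) (hg.2 t)⟩

theorem cpIsKMS.isKMS_restrict (hW : cpIsKMS d γ β W) : d.IsKMS β fun a => W (a, 0) := by
  refine ⟨hW.1.isState_restrict, fun a b fa fb ha hb => ?_⟩
  have hzero := isAnalyticExt_zero d
  simpa [cpMul] using
    hW.2 _ _ _ _ (cpIsAnalyticExt_prodMk ha hzero) (cpIsAnalyticExt_prodMk hb hzero)

lemma cpIsKMS.restrict_invariant_of_mem_analyticElements (hW : cpIsKMS d γ β W) {a : A}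
    (ha : a ∈ analyticElements d) : W (γ a, 0) = W (a, 0) := by
  obtain ⟨f, hf⟩ := ha
  have hzero := isAnalyticExt_zero d
  have hkms := hW.2 _ _ _ _ (cpIsAnalyticExt_prodMk hzero hf)
    (cpIsAnalyticExt_prodMk hzero (isAnalyticExt_one d))
  simpa [cpMul] using hkms.symm

theorem cpIsKMS.restrict_invariant (hW : cpIsKMS d γ β W) (a : A) : W (γ a, 0) = W (a, 0) := by
  have hcont : Continuous fun a => W (a, 0) := hW.1.isState_restrict.continuous
  have hγ : Continuous γ := (StarAlgEquiv.isometry γ).continuous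
  exact congrFun ((hcont.comp hγ).ext_on (dense_analyticElements d) hcont
    fun _ hb => hW.restrict_invariant_of_mem_analyticElements hb) a

theorem kms_state_of_crossed_product_restricts_general (hW : cpIsKMS d γ β W) :
    d.IsKMS β (fun a => W (a, 0)) ∧ ∀ a : A, W (γ a, 0) = W (a, 0) :=
  ⟨hW.isKMS_restrict, hW.restrict_invariant⟩

end States

/-- Any `(𝛂, β)`-KMS state `𝛚` on the `ℤ₂`-crossed product `𝐀 = A ⋊_γ ℤ₂`
(with the extended dynamics `𝛂`) restricts to a `γ`-invariant `(α, β)`-KMS state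
`ω = 𝛚|_{A⊕0}` on `A`. -/
theorem kms_state_of_crossed_product_restricts {A : Type*} [CStarAlgebra A]
    (S : GradedDyn A) (β : ℝ) (W : A × A → ℂ)
    (hW : cpIsKMS S.toDynamics S.γ β W) :
    S.toDynamics.IsKMS β (fun a => W (a, 0)) ∧ ∀ a : A, W (S.γ a, 0) = W (a, 0) := by
  exact kms_state_of_crossed_product_restricts_general hW

end
end

section
/- Let (A, α, γ) be a graded C*-dynamical system with Z₂-crossed product 𝐀 = A ⋊_γ ℤ₂ carrying the extended dynamics 𝛂, and let β ∈ ℝ. For every γ-invariant (α, β)-KMS state ω on A, the state 𝛚^can := ω ∘ E, where E : 𝐀 → A, (a,b) ↦ a is the canonical conditional expectation, is an (𝛂, β)-KMS state on 𝐀 extending ω. In particular every γ-invariant (α, β)-KMS state on A admits at least one KMS extension to the crossed product. -/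
open scoped InnerProductSpace ComplexOrder

noncomputable section

variable {A : Type*} [CStarAlgebra A]

/-! Since `E (p q) = p₁ q₁ + p₂ γ(q₂)`, positivity and the KMS condition for `ω ∘ E` each split into
two instances of the same condition for `ω`. In the second instance the invariance of `ω`, together
with `γ² = 1`, moves `γ` onto the other factor, and `γ` preserves entire analytic elements because
it is bounded and commutes with the dynamics. -/

section Analytic

variable {B : Type*} [CStarAlgebra B]

theorem Dynamics.IsAnalyticExt.map {d : Dynamics A} {e : Dynamics B} {a : A} {f : ℂ → A}
    (hf : d.IsAnalyticExt a f) (φ : A →L[ℂ] B) (hφ : ∀ t x, φ (d.α t x) = e.α t (φ x)) :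
    e.IsAnalyticExt (φ a) (fun z => φ (f z)) :=
  ⟨φ.differentiable.comp hf.1, fun t => (congrArg φ (hf.2 t)).trans (hφ t a)⟩

open scoped CStarAlgebra in
theorem GradedDyn.isAnalyticExt_γ (S : GradedDyn A) {a : A} {f : ℂ → A}
    (hf : S.IsAnalyticExt a f) : S.IsAnalyticExt (S.γ a) (fun z => S.γ (f z)) :=
  hf.map ⟨(S.γ : A →ₗ[ℂ] A), map_continuous S.γ⟩ S.γ_comm

variable {d : Dynamics A} {p : A × A} {f : ℂ → A × A}

theorem cpIsAnalyticExt.fst (hf : cpIsAnalyticExt d p f) :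
    d.IsAnalyticExt p.1 (fun z => (f z).1) :=
  ⟨hf.1.fst, fun t => congrArg Prod.fst (hf.2 t)⟩

theorem cpIsAnalyticExt.snd (hf : cpIsAnalyticExt d p f) :
    d.IsAnalyticExt p.2 (fun z => (f z).2) :=
  ⟨hf.1.snd, fun t => congrArg Prod.snd (hf.2 t)⟩

end Analytic

theorem apply_mul_map_of_involutive {M X : Type*} [Mul M] {σ : M →ₙ* M}
    (hσ : Function.Involutive σ) {f : M → X} (hf : ∀ a, f (σ a) = f a) (a b : M) :
    f (a * σ b) = f (σ a * b) :=
  calc f (a * σ b) = f (σ (a * σ b)) := (hf _).symm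
    _ = f (σ a * b) := by rw [map_mul, hσ]

section State

variable {γ : A ≃⋆ₐ[ℂ] A} {ω : A → ℂ}

theorem apply_fst_cpMul (hω : IsLinearMap ℂ ω) (p q : A × A) :
    ω (cpMul γ p q).1 = ω (p.1 * q.1) + ω (p.2 * γ q.2) :=
  hω.map_add _ _

theorem IsState.cpIsState_comp_fst (hω : IsState ω) (hinv : ∀ a, ω (γ a) = ω a) :
    cpIsState γ (fun p => ω p.1) := by
  obtain ⟨hlin, hpos, hone⟩ := hω
  refine ⟨(hlin.mk' ω ∘ₗ LinearMap.fst ℂ A A).isLinear, fun p => ?_, hone⟩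
  calc 0 ≤ ω (star p.1 * p.1) + ω (star p.2 * p.2) := add_nonneg (hpos _) (hpos _)
    _ = ω (star p.1 * p.1) + ω (γ (star p.2) * γ p.2) := by rw [← map_mul, hinv]
    _ = ω (cpMul γ (cpStar γ p) p).1 := (apply_fst_cpMul hlin (cpStar γ p) p).symm

end State

theorem GradedDyn.cpIsKMS_comp_fst (S : GradedDyn A) {β : ℝ} {ω : A → ℂ}
    (hω : S.IsKMS β ω) (hinv : ∀ a, ω (S.γ a) = ω a) :
    cpIsKMS S.toDynamics S.γ β (fun p => ω p.1) := by
  obtain ⟨hstate, hkms⟩ := hω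
  refine ⟨hstate.cpIsState_comp_fst hinv, fun p q fp fq hp hq => ?_⟩
  have kms_fst : ω (p.1 * (fq (Complex.I * β)).1) = ω (q.1 * p.1) :=
    hkms _ _ _ _ hp.fst hq.fst
  have kms_snd : ω (p.2 * S.γ (fq (Complex.I * β)).2) = ω (S.γ q.2 * p.2) :=
    hkms _ _ _ _ hp.snd (S.isAnalyticExt_γ hq.snd)
  have γ_swap : ω (q.2 * S.γ p.2) = ω (S.γ q.2 * p.2) :=
    apply_mul_map_of_involutive (σ := (S.γ : A →ₙ* A)) S.γ_invol hinv q.2 p.2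
  calc ω (cpMul S.γ p (fq (Complex.I * β))).1
      = ω (p.1 * (fq (Complex.I * β)).1) + ω (p.2 * S.γ (fq (Complex.I * β)).2) :=
        apply_fst_cpMul hstate.1 _ _
    _ = ω (q.1 * p.1) + ω (q.2 * S.γ p.2) := by rw [kms_fst, kms_snd, γ_swap]
    _ = ω (cpMul S.γ q p).1 := (apply_fst_cpMul hstate.1 _ _).symm

/-- For every `γ`-invariant `(α, β)`-KMS state `ω` on `A`, the state
`𝛚^can := ω ∘ E` (with `E : A ⋊_γ ℤ₂ → A, (a,b) ↦ a` the canonical conditional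
expectation) is an `(𝛂, β)`-KMS state on the crossed product extending `ω`; in
particular every `γ`-invariant `(α, β)`-KMS state on `A` admits at least one KMS
extension to the crossed product. -/
theorem canonical_extension_is_kms {A : Type*} [CStarAlgebra A]
    (S : GradedDyn A) (β : ℝ) (ω : A → ℂ)
    (hω : S.toDynamics.IsKMS β ω) (hinv : ∀ a, ω (S.γ a) = ω a) :
    cpIsKMS S.toDynamics S.γ β (fun p : A × A => ω p.1) ∧
    (∀ a : A, (fun p : A × A => ω p.1) (a, 0) = ω a) ∧
    ∃ W : A × A → ℂ, cpIsKMS S.toDynamics S.γ β W ∧ ∀ a : A, W (a, 0) = ω a := by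
  have hcan : cpIsKMS S.toDynamics S.γ β (fun p : A × A => ω p.1) :=
    S.cpIsKMS_comp_fst hω hinv
  exact ⟨hcan, fun _ => rfl, _, hcan, fun _ => rfl⟩

end
end

section
/- Let H be a Hilbert space, A ⊆ B(H) a simple unital C*-algebra, and G a selfadjoint unitary on H satisfying G A G = A and G ∉ A. Then the C*-algebra C*(A, G) generated by A and G is isomorphic to the crossed product A ⋊_{Ad_G} ℤ₂, via the map (a, b) ↦ a + bG. -/
open scoped InnerProductSpace ComplexOrder

noncomputable section

variable {A : Type*} [CStarAlgebra A]

/-!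
Write `u` for the symmetry `G` and `B` for the ambient C*-algebra. Since `u b = γ(b) u`, the space
`ι(A) + ι(A) u` is already a *-algebra. The kernel of `ι` and the set of `b` with `ι b * u ∈ ι(A)`
are closed `γ`-invariant ideals not containing `1`; hence they vanish, and `(a, b) ↦ a + b u` is
injective. For closedness of the range, consider the pairs `(a + b u, a - b u)` in `B × B`. They
form a closed *-subalgebra, since `a` and `b` are recovered from the half-sum and the
half-difference, and the first projection is injective on it. An injective *-homomorphism is
isometric, so the image `ι(A) + ι(A) u` is closed.
-/

section Algebraic

variable {B C : Type*} [Ring B] [StarRing B] [Algebra ℂ B] [Ring C] [StarRing C] [Algebra ℂ C]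
  {γ : A ≃⋆ₐ[ℂ] A} {ι : A →⋆ₐ[ℂ] B} {u : B}

/-- A covariant representation of the `ℤ₂`-action `γ`: a representation `ι` together with a
selfadjoint unitary `u` implementing `γ` as `Ad_u`. -/
structure IsCovariantPair (γ : A ≃⋆ₐ[ℂ] A) (ι : A →⋆ₐ[ℂ] B) (u : B) : Prop where
  star_eq : star u = u
  mul_self : u * u = 1
  map_apply (a : A) : ι (γ a) = u * ι a * u

/-- The integrated form `(a, b) ↦ ι a + ι b * u` of a covariant pair, as a linear map on the
underlying vector space `A × A` of the crossed product. -/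
def cpMap (ι : A →⋆ₐ[ℂ] B) (u : B) : A × A →ₗ[ℂ] B :=
  (ι : A →ₗ[ℂ] B).coprod (LinearMap.mulRight ℂ u ∘ₗ (ι : A →ₗ[ℂ] B))

theorem cpMap_apply (ι : A →⋆ₐ[ℂ] B) (u : B) (p : A × A) :
    cpMap ι u p = ι p.1 + ι p.2 * u :=
  rfl

theorem cpMap_cpOne (ι : A →⋆ₐ[ℂ] B) (u : B) : cpMap ι u cpOne = 1 := by
  simp [cpMap_apply, cpOne]

theorem cpMap_inl (ι : A →⋆ₐ[ℂ] B) (u : B) (a : A) : cpMap ι u (a, 0) = ι a := by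
  simp [cpMap_apply]

theorem cpMap_zero_one (ι : A →⋆ₐ[ℂ] B) (u : B) : cpMap ι u (0, 1) = u := by
  simp [cpMap_apply]

/-- The ideal of coefficients `b` for which `ι b * u` already lies in `ι(A)`; it measures the
failure of `cpMap ι u` to be injective. -/
def overlapIdeal (ι : A →⋆ₐ[ℂ] B) (u : B) : Ideal A where
  carrier := {b | ι b * u ∈ Set.range ι}
  zero_mem' := ⟨0, by simp⟩
  add_mem' := by
    rintro b c ⟨x, hx⟩ ⟨y, hy⟩
    exact ⟨x + y, by rw [map_add, map_add, hx, hy, add_mul]⟩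
  smul_mem' := by
    rintro c b ⟨x, hx⟩
    exact ⟨c * x, by rw [smul_eq_mul, map_mul, map_mul, hx, mul_assoc]⟩

namespace IsCovariantPair

theorem mul_map (h : IsCovariantPair γ ι u) (a : A) : u * ι a = ι (γ a) * u := by
  rw [h.map_apply, mul_assoc, h.mul_self, mul_one]

theorem neg (h : IsCovariantPair γ ι u) : IsCovariantPair γ ι (-u) where
  star_eq := by rw [star_neg, h.star_eq]
  mul_self := by rw [neg_mul_neg, h.mul_self]
  map_apply a := by rw [h.map_apply, neg_mul, neg_mul_neg]

theorem prod {κ : A →⋆ₐ[ℂ] C} {v : C} (hu : IsCovariantPair γ ι u) (hv : IsCovariantPair γ κ v) :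
    IsCovariantPair γ (ι.prod κ) (u, v) where
  star_eq := Prod.ext hu.star_eq hv.star_eq
  mul_self := Prod.ext hu.mul_self hv.mul_self
  map_apply a := Prod.ext (hu.map_apply a) (hv.map_apply a)

theorem cpMap_cpMul (h : IsCovariantPair γ ι u) (p q : A × A) :
    cpMap ι u (cpMul γ p q) = cpMap ι u p * cpMap ι u q := by
  have move_right (c : A) : ι p.2 * u * ι c = ι p.2 * ι (γ c) * u := by
    rw [mul_assoc, h.mul_map, mul_assoc]
  have cancel : ι p.2 * u * (ι q.2 * u) = ι p.2 * ι (γ q.2) := by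
    rw [← mul_assoc, move_right, mul_assoc, h.mul_self, mul_one]
  simp only [cpMap_apply, cpMul, map_add, map_mul, add_mul, mul_add, move_right, cancel, mul_assoc]
  abel

theorem cpMap_cpStar (h : IsCovariantPair γ ι u) (p : A × A) :
    cpMap ι u (cpStar γ p) = star (cpMap ι u p) := by
  simp only [cpMap_apply, cpStar, star_add, star_mul, h.star_eq, ← map_star ι, h.mul_map]

/-- The *-algebra `ι(A) + ι(A) u` of a covariant pair, with the range of `cpMap ι u` as its
underlying set. -/
def starSubalgebra [StarModule ℂ B] (h : IsCovariantPair γ ι u) : StarSubalgebra ℂ B where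
  carrier := Set.range (cpMap ι u)
  mul_mem' := by
    rintro _ _ ⟨p, rfl⟩ ⟨q, rfl⟩
    exact ⟨cpMul γ p q, h.cpMap_cpMul p q⟩
  add_mem' := by
    rintro _ _ ⟨p, rfl⟩ ⟨q, rfl⟩
    exact ⟨p + q, map_add _ p q⟩
  algebraMap_mem' r := ⟨(algebraMap ℂ A r, 0), by rw [cpMap_inl, AlgHomClass.commutes]⟩
  star_mem' := by
    rintro _ ⟨p, rfl⟩
    exact ⟨cpStar γ p, h.cpMap_cpStar p⟩

theorem coe_adjoin_eq_range_cpMap [StarModule ℂ B] (h : IsCovariantPair γ ι u) :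
    (Algebra.adjoin ℂ (Set.range ι ∪ {u}) : Set B) = Set.range (cpMap ι u) := by
  apply Set.Subset.antisymm
  · suffices Algebra.adjoin ℂ (Set.range ι ∪ {u}) ≤ h.starSubalgebra.toSubalgebra from this
    apply Algebra.adjoin_le
    rintro _ (⟨a, rfl⟩ | rfl)
    · exact ⟨(a, 0), cpMap_inl ι u a⟩
    · exact ⟨(0, 1), cpMap_zero_one ι _⟩
  · rintro _ ⟨p, rfl⟩
    have map_mem (a : A) : ι a ∈ Algebra.adjoin ℂ (Set.range ι ∪ {u}) :=
      Algebra.subset_adjoin (Or.inl ⟨a, rfl⟩)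
    have mem : u ∈ Algebra.adjoin ℂ (Set.range ι ∪ {u}) := Algebra.subset_adjoin (Or.inr rfl)
    exact add_mem (map_mem p.1) (mul_mem (map_mem p.2) mem)

theorem star_mem_overlapIdeal (h : IsCovariantPair γ ι u) {b : A} (hb : b ∈ overlapIdeal ι u) :
    star b ∈ overlapIdeal ι u := by
  obtain ⟨x, hx⟩ := hb
  have map_star_eq : ι (star x) = u * ι (star b) := by
    rw [map_star, hx, star_mul, h.star_eq, map_star]
  exact ⟨γ (star x), by rw [h.map_apply, map_star_eq, ← mul_assoc, h.mul_self, one_mul]⟩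

theorem map_mem_overlapIdeal (h : IsCovariantPair γ ι u) {b : A} (hb : b ∈ overlapIdeal ι u) :
    γ b ∈ overlapIdeal ι u := by
  obtain ⟨y, hy⟩ := h.star_mem_overlapIdeal hb
  exact ⟨star y, by rw [map_star, hy, star_mul, h.star_eq, ← map_star, star_star, h.mul_map]⟩

theorem map_mem_ker (h : IsCovariantPair γ ι u) {a : A} (ha : a ∈ RingHom.ker ι) :
    γ a ∈ RingHom.ker ι := by
  rw [RingHom.mem_ker] at ha ⊢
  rw [h.map_apply, ha, mul_zero, zero_mul]

theorem mem_starSubalgebra_prod_neg_iff [StarModule ℂ B] (h : IsCovariantPair γ ι u) {x : B × B} :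
    x ∈ (h.prod h.neg).starSubalgebra ↔ x.1 + x.2 ∈ ι.range ∧ (x.1 - x.2) * u ∈ ι.range := by
  constructor
  · rintro ⟨⟨a, b⟩, rfl⟩
    refine ⟨⟨a + a, ?_⟩, ⟨b + b, ?_⟩⟩
    · change ι (a + a) = (ι a + ι b * u) + (ι a + ι b * -u)
      rw [map_add]
      noncomm_ring
    · change ι (b + b) = ((ι a + ι b * u) - (ι a + ι b * -u)) * u
      calc ι (b + b) = (ι b + ι b) * (u * u) := by rw [h.mul_self, mul_one, map_add]
        _ = _ := by noncomm_ring
  · rintro ⟨⟨a, ha : ι a = _⟩, ⟨b, hb : ι b = _⟩⟩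
    have map_mul_u : ι b * u = x.1 - x.2 := by rw [hb, mul_assoc, h.mul_self, mul_one]
    refine ⟨(2⁻¹ : ℂ) • (a, b), ?_⟩
    rw [map_smul]
    apply Prod.ext
    · change (2⁻¹ : ℂ) • (ι a + ι b * u) = x.1
      rw [ha, map_mul_u]
      module
    · change (2⁻¹ : ℂ) • (ι a + ι b * -u) = x.2
      rw [ha, mul_neg, map_mul_u]
      module

end IsCovariantPair

theorem cpMap_injective (hι : Function.Injective ι) (hu : overlapIdeal ι u = ⊥) :
    Function.Injective (cpMap ι u) := by
  rw [injective_iff_map_eq_zero]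
  rintro ⟨a, b⟩ hab
  rw [cpMap_apply] at hab
  have mem : b ∈ overlapIdeal ι u := ⟨-a, by rw [map_neg, neg_eq_of_add_eq_zero_right hab]⟩
  obtain rfl : b = 0 := by rwa [hu, Ideal.mem_bot] at mem
  have ha : ι a = 0 := by simpa using hab
  rw [(map_eq_zero_iff ι hι).mp ha, Prod.mk_zero_zero]

end Algebraic

section CStar

open scoped CStarAlgebra

variable {B : Type*} [CStarAlgebra B] {γ : A ≃⋆ₐ[ℂ] A} {ι : A →⋆ₐ[ℂ] B} {u : B}

/-- `γ`-simplicity of `A`: no nontrivial closed two-sided ideal is mapped into itself by `γ`.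
Since `Ideal A` means left ideal, two-sidedness is encoded as invariance under `star`. -/
def IsActionSimple (γ : A ≃⋆ₐ[ℂ] A) : Prop :=
  ∀ I : Ideal A, IsClosed (I : Set A) → (∀ a ∈ I, star a ∈ I) → (∀ a ∈ I, γ a ∈ I) →
    I = ⊥ ∨ I = ⊤

theorem isClosed_range_starAlgHom (hι : Function.Injective ι) : IsClosed (Set.range ι) :=
  (NonUnitalStarAlgHom.isometry ι hι).isClosedEmbedding.isClosed_range

theorem isClosed_image_starAlgHom {C : Type*} [CStarAlgebra C] {S : StarSubalgebra ℂ B}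
    (hS : IsClosed (S : Set B)) {φ : B →⋆ₐ[ℂ] C} (hφ : Set.InjOn φ S) :
    IsClosed (φ '' (S : Set B)) := by
  let restriction : S →⋆ₐ[ℂ] C := φ.comp S.subtype
  have injective : Function.Injective restriction := hφ.injective
  have range_eq : Set.range restriction = φ '' (S : Set B) := (Set.image_eq_range φ S).symm
  rw [← range_eq]
  exact isClosed_range_starAlgHom injective

namespace IsCovariantPair

theorem isClosed_starSubalgebra_prod_neg (h : IsCovariantPair γ ι u)
    (hι : Function.Injective ι) :
    IsClosed ((h.prod h.neg).starSubalgebra : Set (B × B)) := by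
  have isClosed_range : IsClosed (ι.range : Set B) := isClosed_range_starAlgHom hι
  have coe_eq : ((h.prod h.neg).starSubalgebra : Set (B × B)) =
      (fun x ↦ x.1 + x.2) ⁻¹' ι.range ∩ (fun x ↦ (x.1 - x.2) * u) ⁻¹' ι.range :=
    Set.ext fun _ ↦ h.mem_starSubalgebra_prod_neg_iff
  rw [coe_eq]
  exact (isClosed_range.preimage (by fun_prop)).inter (isClosed_range.preimage (by fun_prop))

theorem isClosed_range_cpMap (h : IsCovariantPair γ ι u)
    (hu : Function.Injective (cpMap ι u)) : IsClosed (Set.range (cpMap ι u)) := by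
  have injective_ι : Function.Injective ι := fun a b hab ↦
    congrArg Prod.fst (hu (by rw [cpMap_inl, cpMap_inl, hab] : cpMap ι u (a, 0) = cpMap ι u (b, 0)))
  let S := (h.prod h.neg).starSubalgebra
  have injOn_fst : Set.InjOn (StarAlgHom.fst ℂ B B) S := by
    rintro _ ⟨p, rfl⟩ _ ⟨q, rfl⟩ hpq
    rw [hu hpq]
  have image_fst : StarAlgHom.fst ℂ B B '' S = Set.range (cpMap ι u) :=
    (Set.range_comp _ _).symm
  rw [← image_fst]
  exact isClosed_image_starAlgHom (h.isClosed_starSubalgebra_prod_neg injective_ι) injOn_fst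

theorem injective_of_isActionSimple [Nontrivial B] (h : IsCovariantPair γ ι u)
    (hγ : IsActionSimple γ) : Function.Injective ι := by
  rw [RingHom.injective_iff_ker_eq_bot]
  refine (hγ (RingHom.ker ι) ?_ ?_ fun _ ↦ h.map_mem_ker).resolve_right (RingHom.ker_ne_top ι)
  · exact isClosed_singleton.preimage (map_continuous ι)
  · intro a ha
    rw [RingHom.mem_ker] at ha ⊢
    rw [map_star, ha, star_zero]

theorem overlapIdeal_eq_bot (h : IsCovariantPair γ ι u) (hι : Function.Injective ι)
    (hγ : IsActionSimple γ) (hu : u ∉ Set.range ι) : overlapIdeal ι u = ⊥ := by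
  have isClosed : IsClosed (overlapIdeal ι u : Set A) :=
    (isClosed_range_starAlgHom hι).preimage ((map_continuous ι).mul_const u)
  have one_notMem : (1 : A) ∉ overlapIdeal ι u := by
    rintro ⟨a, ha⟩
    exact hu ⟨a, by rw [ha, map_one, one_mul]⟩
  exact (hγ _ isClosed (fun _ ↦ h.star_mem_overlapIdeal) fun _ ↦
    h.map_mem_overlapIdeal).resolve_right ((Ideal.ne_top_iff_one _).mpr one_notMem)

end IsCovariantPair

theorem crossed_product_iso_CStar_of_simple_general (h : IsCovariantPair γ ι u)
    (hγ : IsActionSimple γ) (hu : u ∉ Set.range ι) :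
    Function.Injective (cpMap ι u) ∧
    (∀ p q, cpMap ι u (cpMul γ p q) = cpMap ι u p * cpMap ι u q) ∧
    (∀ p, cpMap ι u (cpStar γ p) = star (cpMap ι u p)) ∧
    cpMap ι u cpOne = 1 ∧
    Set.range (cpMap ι u) = closure (Algebra.adjoin ℂ (Set.range ι ∪ {u}) : Set B) := by
  have : Nontrivial B := nontrivial_of_ne u (ι 0) fun hu₀ ↦ hu ⟨0, hu₀.symm⟩
  have injective_ι : Function.Injective ι := h.injective_of_isActionSimple hγ
  have injective : Function.Injective (cpMap ι u) :=
    cpMap_injective injective_ι (h.overlapIdeal_eq_bot injective_ι hγ hu)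
  refine ⟨injective, h.cpMap_cpMul, h.cpMap_cpStar, cpMap_cpOne ι u, ?_⟩
  rw [h.coe_adjoin_eq_range_cpMap, (h.isClosed_range_cpMap injective).closure_eq]

end CStar

/-- Let `A ⊆ B(H)` be a simple unital C*-algebra (realized here via an
injective unital *-homomorphism `ι : A → B(H)`), and `G` a selfadjoint unitary on `H`
with `G A G = A` (i.e. `Ad_G` induces an automorphism `γ` of `A`) and `G ∉ A`. Then
`(a, b) ↦ a + b G` is an isomorphism from the crossed product `A ⋊_{Ad_G} ℤ₂` onto the
C*-algebra `C*(A, G)` generated by `A` and `G`: it is injective, multiplicative and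
star-preserving for the crossed-product operations, unital, and its range is
`C*(A, G)`. -/
theorem crossed_product_iso_CStar_of_simple
    {Hs : Type*} [NormedAddCommGroup Hs] [InnerProductSpace ℂ Hs] [CompleteSpace Hs]
    (ι : A →⋆ₐ[ℂ] (Hs →L[ℂ] Hs)) (hι : Function.Injective ι)
    (hclosed : IsClosed (Set.range ι))
    (hsimple : ∀ I : Ideal A, IsClosed (I : Set A) → (∀ a ∈ I, star a ∈ I) →
      I = ⊥ ∨ I = ⊤)
    (G : Hs →L[ℂ] Hs) (hG_sa : star G = G) (hG_un : G * G = 1)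
    (γ : A ≃⋆ₐ[ℂ] A) (hγ : ∀ a : A, ι (γ a) = G * ι a * G)
    (hGnot : ∀ a : A, ι a ≠ G) :
    Function.Injective (fun p : A × A => ι p.1 + ι p.2 * G) ∧
    (∀ p q : A × A,
      ι (cpMul γ p q).1 + ι (cpMul γ p q).2 * G = (ι p.1 + ι p.2 * G) * (ι q.1 + ι q.2 * G)) ∧
    (∀ p : A × A,
      ι (cpStar γ p).1 + ι (cpStar γ p).2 * G = star (ι p.1 + ι p.2 * G)) ∧
    (ι (cpOne : A × A).1 + ι (cpOne : A × A).2 * G = 1) ∧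
    Set.range (fun p : A × A => ι p.1 + ι p.2 * G) =
      closure ((Algebra.adjoin ℂ (Set.range (fun a : A => ι a) ∪ {G}) :
        Subalgebra ℂ (Hs →L[ℂ] Hs)) : Set (Hs →L[ℂ] Hs)) := by
  exact crossed_product_iso_CStar_of_simple_general ⟨hG_sa, hG_un, hγ⟩
    (fun I hI_closed hI_star _ ↦ hsimple I hI_closed hI_star) fun ⟨a, ha⟩ ↦ hGnot a ha

end
end

section
/- Let (A, α, γ) be a graded C*-dynamical system, β ∈ ℝ, ω a γ-invariant (α, β)-KMS state on A with GNS triple (H, π, Ω), M := π(A)'' the enveloping von Neumann algebra with modular conjugation J associated to (M, Ω), and V the unique selfadjoint unitary on H with V π(a) V = π(γ(a)) and V Ω = Ω. Then the map Ξ sending a hermitian γ-twisted (α, β)-KMS functional ρ dominated by ω to the unique operator R_ρ ∈ M with ρ(a) = ⟨Ω, π(a) R_ρ Ω⟩ for all a ∈ A is a bijection from the set F_β(A, α, γ, ω) of such functionals onto the set of selfadjoint elements of the V-twisted center Z(M, V) of norm at most 1, and Ξ preserves convex combinations. -/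
open scoped InnerProductSpace ComplexOrder

noncomputable section

variable {A : Type*} [CStarAlgebra A]

/-- The enveloping von Neumann algebra `M = π(A)''` of a representation `π`. -/
def envVN {A : Type*} [CStarAlgebra A]
    {Hs : Type*} [NormedAddCommGroup Hs] [InnerProductSpace ℂ Hs] [CompleteSpace Hs]
    (π : A →⋆ₐ[ℂ] (Hs →L[ℂ] Hs)) : Set (Hs →L[ℂ] Hs) :=
  Set.centralizer (Set.centralizer (Set.range fun a => π a))

/-!
Domination by `ω` makes `(π(a) Ω, π(b) Ω) ↦ ρ(a* b)` a bounded form, so `ρ(a) = ⟨Ω, π(a) T Ω⟩` for a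
unique `T` in the commutant `π(A)'`. Then `ρ` is dominated by `ω` iff `‖T‖ ≤ 1`, hermitian iff
`T = T*`, and in that case twisted KMS iff `T V = J T J`. The operator `R_ρ` is `J T J`, which
agrees with `T` on `Ω` because `V Ω = Ω`.

It remains to know that `J π(A)'' J = π(A)'`. As `J π(c) J` commutes with `π(A)` by a computation on
analytic vectors, the point is that an operator `Y` commuting with `J π(A) J` lies in `π(A)''`.
Writing `Δ^{1/2} π(a) Ω = π(α_{iβ/2}(a)) Ω`, the vectors `J X* Ω` for `X ∈ π(A)'` and `Y Ω` lie in
the domain of the adjoint of `Δ^{1/2}`, with images `X Ω` and `J Y* Ω`. This adjoint is symmetric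
because the deficiency spaces vanish: a deficiency vector `u` makes `z ↦ ⟨u, π(α_z(a)) Ω⟩` bounded,
hence constant by Liouville's theorem. Symmetry reads `⟨X Ω, Y Ω⟩ = ⟨Y* Ω, X* Ω⟩`; applied to
`X* J π(c) J` and `Y π(b)` it gives `X Y = Y X`.
-/

section ComplexAnalysis

open Filter Topology MeasureTheory

theorem eq_of_forall_ofReal_eq {E : Type*} [NormedAddCommGroup E] [NormedSpace ℂ E]
    [CompleteSpace E] {f g : ℂ → E} (hf : Differentiable ℂ f) (hg : Differentiable ℂ g)
    (h : ∀ t : ℝ, f t = g t) : f = g := by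
  have hreal : Tendsto ((↑) : ℝ → ℂ) (𝓝[≠] 0) (𝓝[≠] 0) :=
    Complex.continuous_ofReal.continuousWithinAt.tendsto_nhdsWithin
      fun t ht => Complex.ofReal_ne_zero.2 ht
  exact AnalyticOnNhd.eq_of_frequently_eq (fun z _ => hf.analyticAt z)
    (fun z _ => hg.analyticAt z) (hreal.frequently (Frequently.of_forall h))

theorem apply_eq_apply_of_periodic_norm {F : Type*} [NormedAddCommGroup F] [NormedSpace ℂ F]
    {g : ℂ → F} (hg : Differentiable ℂ g) (hper : Function.Periodic (fun s => ‖g s‖) 1)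
    {C : ℝ} (hC : ∀ s : ℂ, s.re ∈ Set.Icc 0 1 → ‖g s‖ ≤ C) (s s' : ℂ) : g s = g s' := by
  have hbound (s : ℂ) : ‖g s‖ ≤ C := by
    have hshift : ‖g (s - ⌊s.re⌋)‖ = ‖g s‖ := by
      simpa only [mul_one] using hper.sub_int_mul_eq ⌊s.re⌋
    rw [← hshift]
    refine hC _ ?_
    rw [Complex.sub_re, Complex.intCast_re]
    exact ⟨Int.fract_nonneg _, (Int.fract_lt_one _).le⟩
  exact hg.apply_eq_apply_of_bounded
    (isBounded_iff_forall_norm_le.2 ⟨C, Set.forall_mem_range.2 hbound⟩) s s'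

theorem aestronglyMeasurable_deriv_param {X E : Type*} [MeasurableSpace X] {μ : Measure X}
    [NormedAddCommGroup E] [NormedSpace ℂ E] {F : ℂ → X → E} {w : ℂ}
    (hmeas : ∀ z, AEStronglyMeasurable (F z) μ)
    (hdiff : ∀ x, DifferentiableAt ℂ (fun z => F z x) w) :
    AEStronglyMeasurable (fun x => deriv (fun z => F z x) w) μ := by
  refine aestronglyMeasurable_of_tendsto_ae (𝓝[≠] (0 : ℂ))
    (f := fun t x => t⁻¹ • (F (w + t) x - F w x)) (fun t => ?_) (.of_forall fun x => ?_)
  · exact ((hmeas _).sub (hmeas _)).const_smul _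
  · exact hasDerivAt_iff_tendsto_slope_zero.1 (hdiff x).hasDerivAt

theorem differentiable_integral_of_dominated {X E : Type*} [MeasurableSpace X] {μ : Measure X}
    [NormedAddCommGroup E] [NormedSpace ℂ E] {F : ℂ → X → E}
    (hmeas : ∀ z, AEStronglyMeasurable (F z) μ)
    (hdiff : ∀ x, Differentiable ℂ fun z => F z x)
    (hbound : ∀ r : ℝ, ∃ b : X → ℝ, Integrable b μ ∧ ∀ z, ‖z‖ ≤ r → ∀ x, ‖F z x‖ ≤ b x) :
    Differentiable ℂ fun z => ∫ x, F z x ∂μ := by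
  intro w
  obtain ⟨b, hb, hFb⟩ := hbound (‖w‖ + 2)
  have hint : Integrable (F w) μ :=
    hb.mono' (hmeas w) (.of_forall (hFb w (by linarith)))
  have hderiv (x : X) (z : ℂ) (hz : z ∈ Metric.ball w 1) :
      ‖deriv (fun z => F z x) z‖ ≤ b x := by
    rw [← div_one (b x)]
    refine Complex.norm_deriv_le_of_forall_mem_sphere_norm_le one_pos (hdiff x).diffContOnCl
      fun u hu => hFb u ?_ x
    have huz : ‖u - z‖ = 1 := mem_sphere_iff_norm.1 hu
    have hzw : ‖z - w‖ < 1 := mem_ball_iff_norm.1 hz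
    calc ‖u‖ = ‖(u - z) + (z - w) + w‖ := by congr 1; ring
      _ ≤ ‖u - z‖ + ‖z - w‖ + ‖w‖ := norm_add₃_le
      _ ≤ ‖w‖ + 2 := by linarith
  exact (hasDerivAt_integral_of_dominated_loc_of_deriv_le (Metric.ball_mem_nhds w one_pos)
    (.of_forall hmeas) hint (aestronglyMeasurable_deriv_param hmeas fun x => hdiff x w)
    (.of_forall hderiv) hb (.of_forall fun x z _ => (hdiff x z).hasDerivAt)).2.differentiableAt

theorem norm_cexp_neg_sub_sq_le (t : ℝ) (w : ℂ) :
    ‖Complex.exp (-(t - w) ^ 2)‖ ≤ Real.exp (‖w‖ ^ 2) * Real.exp (-(1 / 2) * t ^ 2) := by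
  have hre : (-((t : ℂ) - w) ^ 2).re = -(t - w.re) ^ 2 + w.im ^ 2 := by
    simp only [pow_two, Complex.neg_re, Complex.mul_re, Complex.sub_re, Complex.sub_im,
      Complex.ofReal_re, Complex.ofReal_im]
    ring
  rw [Complex.norm_exp, ← Real.exp_add, Real.exp_le_exp, hre, Complex.sq_norm,
    Complex.normSq_apply]
  nlinarith [sq_nonneg (t - 2 * w.re)]

theorem differentiable_integral_cexp_neg_sub_sq_smul {E : Type*} [NormedAddCommGroup E]
    [NormedSpace ℂ E] {g : ℝ → E} (hg : Continuous g) {B : ℝ} (hB : ∀ t, ‖g t‖ ≤ B) :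
    Differentiable ℂ fun w : ℂ => ∫ t : ℝ, Complex.exp (-(t - w) ^ 2) • g t := by
  refine differentiable_integral_of_dominated
    (fun w => Continuous.aestronglyMeasurable (by fun_prop)) (fun t => by fun_prop) fun r => ?_
  refine ⟨fun t => Real.exp (r ^ 2) * Real.exp (-(1 / 2) * t ^ 2) * B,
    ((integrable_exp_neg_mul_sq (by norm_num)).const_mul _).mul_const _, fun w hw t => ?_⟩
  rw [norm_smul]
  refine mul_le_mul ((norm_cexp_neg_sub_sq_le t w).trans ?_) (hB t) (norm_nonneg _)
    (by positivity)
  gcongr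

theorem integrable_cexp_neg_sq : Integrable fun t : ℝ => Complex.exp (-(t : ℂ) ^ 2) := by
  simpa only [neg_mul, one_mul] using integrable_cexp_neg_mul_sq (b := 1) (by simp)

theorem integral_cexp_neg_sq : ∫ t : ℝ, Complex.exp (-(t : ℂ) ^ 2) = (√Real.pi : ℝ) := by
  have hreal := integral_gaussian 1
  rw [div_one] at hreal
  rw [← hreal, ← integral_complex_ofReal]
  exact integral_congr_ae (.of_forall fun t => by push_cast; rw [neg_mul, one_mul])

end ComplexAnalysis

namespace Dynamics

open Filter Topology MeasureTheory

variable (d : Dynamics A)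

theorem norm_α (t : ℝ) (a : A) : ‖d.α t a‖ = ‖a‖ :=
  StarAlgEquiv.norm_map (d.α t) a

/-- The automorphism `α_t` as a bounded linear map. -/
def αCLM (t : ℝ) : A →L[ℂ] A :=
  LinearMap.mkContinuous (d.α t).toAlgEquiv.toLinearMap 1 fun a =>
    (one_mul ‖a‖).symm ▸ (d.norm_α t a).le

theorem αCLM_apply (t : ℝ) (a : A) : d.αCLM t a = d.α t a := rfl

namespace IsAnalyticExt

variable {d} {a b : A} {f g : ℂ → A}

theorem apply_zero (hf : d.IsAnalyticExt a f) : f 0 = a := by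
  rw [← Complex.ofReal_zero, hf.2, d.α_zero]

theorem apply_add_ofReal (hf : d.IsAnalyticExt a f) (z : ℂ) (t : ℝ) :
    f (z + t) = d.α t (f z) := by
  refine congrFun (eq_of_forall_ofReal_eq (hf.1.comp (differentiable_id.add_const (t : ℂ)))
    ((d.αCLM t).differentiable.comp hf.1) fun s => ?_) z
  change f (s + t) = d.α t (f s)
  rw [hf.2, ← d.α_add, ← hf.2, add_comm t s, Complex.ofReal_add]

theorem norm_apply (hf : d.IsAnalyticExt a f) (z : ℂ) : ‖f z‖ = ‖f (z.im * Complex.I)‖ := by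
  rw [← d.norm_α z.re (f (z.im * Complex.I)), ← hf.apply_add_ofReal, add_comm, Complex.re_add_im]

theorem shift (hf : d.IsAnalyticExt a f) (w : ℂ) :
    d.IsAnalyticExt (f w) fun z => f (w + z) :=
  ⟨hf.1.comp (differentiable_id.const_add w), hf.apply_add_ofReal w⟩

theorem mul (hf : d.IsAnalyticExt a f) (hg : d.IsAnalyticExt b g) :
    d.IsAnalyticExt (a * b) fun z => f z * g z :=
  ⟨hf.1.mul hg.1, fun t => by beta_reduce; rw [hf.2, hg.2, map_mul]⟩

theorem add (hf : d.IsAnalyticExt a f) (hg : d.IsAnalyticExt b g) :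
    d.IsAnalyticExt (a + b) fun z => f z + g z :=
  ⟨hf.1.add hg.1, fun t => by beta_reduce; rw [hf.2, hg.2, map_add]⟩

theorem smul (c : ℂ) (hf : d.IsAnalyticExt a f) : d.IsAnalyticExt (c • a) fun z => c • f z :=
  ⟨hf.1.const_smul c, fun t => by beta_reduce; rw [hf.2, map_smul]⟩

theorem star (hf : d.IsAnalyticExt a f) :
    d.IsAnalyticExt (star a) fun z => star (f (starRingEnd ℂ z)) :=
  ⟨fun z => by simpa [Function.comp_def] using (hf.1 (starRingEnd ℂ z)).star_star,
    fun t => by beta_reduce; rw [Complex.conj_ofReal, hf.2, map_star]⟩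

theorem one : d.IsAnalyticExt 1 fun _ => 1 :=
  ⟨differentiable_const 1, fun t => (map_one (d.α t)).symm⟩

theorem zero : d.IsAnalyticExt 0 fun _ => 0 :=
  ⟨differentiable_const 0, fun t => (map_zero (d.α t)).symm⟩

-- `z ↦ φ (f z)` is bounded on horizontal strips because `‖f z‖` only depends on `z.im`, so
-- quasi-periodicity in the imaginary direction makes Liouville's theorem applicable.
theorem apply_eq_of_quasiperiodic {F : Type*} [NormedAddCommGroup F] [NormedSpace ℂ F]
    (hf : d.IsAnalyticExt a f) (φ : A →L[ℂ] F) {κ : ℝ} {c : ℂ} (hc : ‖c‖ = 1)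
    (hper : ∀ z, φ (f (z + Complex.I * κ)) = c • φ (f z)) (s : ℂ) :
    φ (f (Complex.I * κ * s)) = φ a := by
  have hcont : Continuous fun x : ℝ => ‖f (↑(κ * x) * Complex.I)‖ :=
    (hf.1.continuous.comp (by fun_prop)).norm
  obtain ⟨C, hC⟩ := (isCompact_Icc (a := (0 : ℝ)) (b := 1)).bddAbove_image hcont.continuousOn
  have hdiff : Differentiable ℂ fun s => φ (f (Complex.I * κ * s)) :=
    φ.differentiable.comp (hf.1.comp (by fun_prop))
  have hnorm_per : Function.Periodic (fun s => ‖φ (f (Complex.I * κ * s))‖) 1 := fun s => by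
    beta_reduce
    rw [mul_add, mul_one, hper, norm_smul, hc, one_mul]
  have hstrip (s : ℂ) (hs : s.re ∈ Set.Icc 0 1) : ‖φ (f (Complex.I * κ * s))‖ ≤ ‖φ‖ * C := by
    have him : (Complex.I * κ * s).im = κ * s.re := by simp
    refine φ.le_opNorm_of_le ?_
    rw [hf.norm_apply, him]
    exact hC (Set.mem_image_of_mem _ hs)
  simpa only [mul_zero, hf.apply_zero] using
    apply_eq_apply_of_periodic_norm hdiff hnorm_per hstrip s 0

end IsAnalyticExt

/-- The Gaussian mean `∫ e^{-t²} α_{t/c}(a) dt` of the orbit of `a`, as a function of the complex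
time `z` by which the Gaussian is translated. For `c ≠ 0` it extends `t ↦ α_t` of its value at `0`,
and that value tends to `√π a` as `c → ∞`. -/
def gaussianMean (c : ℝ) (a : A) (z : ℂ) : A :=
  ∫ t : ℝ, Complex.exp (-(t - c * z) ^ 2) • d.α (t / c) a

variable (c : ℝ) (a : A)

theorem gaussianMean_zero :
    d.gaussianMean c a 0 = ∫ t : ℝ, Complex.exp (-(t : ℂ) ^ 2) • d.α (t / c) a := by
  simp only [gaussianMean, mul_zero, sub_zero]

theorem continuous_α_div : Continuous fun t : ℝ => d.α (t / c) a :=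
  (d.α_cont a).comp (continuous_id.div_const c)

theorem integrable_cexp_neg_sq_smul_α :
    Integrable fun t : ℝ => Complex.exp (-(t : ℂ) ^ 2) • d.α (t / c) a :=
  (integrable_cexp_neg_sq.norm.mul_const ‖a‖).mono'
    (by have := d.continuous_α_div c a; fun_prop)
    (.of_forall fun t => by rw [norm_smul, d.norm_α])

variable {c} in
theorem isAnalyticExt_gaussianMean (hc : c ≠ 0) :
    d.IsAnalyticExt (d.gaussianMean c a 0) (d.gaussianMean c a) := by
  refine ⟨(differentiable_integral_cexp_neg_sub_sq_smul (d.continuous_α_div c a)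
    fun t => (d.norm_α _ a).le).comp (differentiable_id.const_mul (c : ℂ)), fun s => ?_⟩
  calc d.gaussianMean c a s
      = ∫ t : ℝ, Complex.exp (-(↑(t + c * s) - c * s) ^ 2) • d.α ((t + c * s) / c) a :=
        (integral_add_right_eq_self
          (fun t : ℝ => Complex.exp (-(t - c * s) ^ 2) • d.α (t / c) a) (c * s)).symm
    _ = ∫ t : ℝ, d.αCLM s (Complex.exp (-(t : ℂ) ^ 2) • d.α (t / c) a) := by
        refine integral_congr_ae (.of_forall fun t => ?_)
        have htime : (t + c * s) / c = s + t / c := by field_simp; ring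
        simp only [htime, map_smul, αCLM_apply, d.α_add, Complex.ofReal_add, Complex.ofReal_mul,
          add_sub_cancel_right]
    _ = d.α s (d.gaussianMean c a 0) := by
        rw [ContinuousLinearMap.integral_comp_comm _ (d.integrable_cexp_neg_sq_smul_α c a),
          ← gaussianMean_zero, αCLM_apply]

theorem tendsto_gaussianMean_zero :
    Tendsto (fun c : ℝ => d.gaussianMean c a 0) atTop (𝓝 ((√Real.pi : ℂ) • a)) := by
  simp only [gaussianMean_zero]
  rw [← integral_cexp_neg_sq, ← integral_smul_const]
  refine tendsto_integral_filter_of_dominated_convergence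
    (fun t => ‖Complex.exp (-(t : ℂ) ^ 2)‖ * ‖a‖)
    (.of_forall fun c => (d.integrable_cexp_neg_sq_smul_α c a).aestronglyMeasurable)
    (.of_forall fun c => .of_forall fun t => by rw [norm_smul, d.norm_α])
    (integrable_cexp_neg_sq.norm.mul_const _) (.of_forall fun t => Tendsto.const_smul ?_ _)
  have htime : Tendsto (fun c : ℝ => t / c) atTop (𝓝 0) := tendsto_const_nhds.div_atTop tendsto_id
  simpa only [Function.comp_def, d.α_zero] using ((d.α_cont a).tendsto 0).comp htime

theorem dense_setOf_isAnalyticExt : Dense {a : A | ∃ f, d.IsAnalyticExt a f} := by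
  intro a
  have hpi : (√Real.pi : ℂ) ≠ 0 :=
    Complex.ofReal_ne_zero.2 (Real.sqrt_pos.2 Real.pi_pos).ne'
  have hlim : Tendsto (fun c : ℝ => (√Real.pi : ℂ)⁻¹ • d.gaussianMean c a 0) atTop (𝓝 a) := by
    simpa only [inv_smul_smul₀ hpi] using
      (d.tendsto_gaussianMean_zero a).const_smul (√Real.pi : ℂ)⁻¹
  refine mem_closure_of_tendsto hlim ((eventually_ne_atTop 0).mono fun c hc => ?_)
  exact ⟨_, (d.isAnalyticExt_gaussianMean a hc).smul _⟩

end Dynamics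

section HilbertSpace

theorem clm_ext_of_denseRange {𝕜 E F G : Type*} [RCLike 𝕜] [NormedAddCommGroup F] [NormedSpace 𝕜 F]
    [NormedAddCommGroup G] [NormedSpace 𝕜 G] {e : E → F} (he : DenseRange e) {S T : F →L[𝕜] G}
    (h : ∀ x, S (e x) = T (e x)) : S = T :=
  DFunLike.coe_injective (he.equalizer S.continuous T.continuous (funext h))

variable {𝕜 H : Type*} [RCLike 𝕜] [NormedAddCommGroup H] [InnerProductSpace 𝕜 H] [CompleteSpace H]

theorem inner_star_apply_left (X : H →L[𝕜] H) (ξ η : H) : ⟪star X ξ, η⟫_𝕜 = ⟪ξ, X η⟫_𝕜 :=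
  ContinuousLinearMap.adjoint_inner_left X η ξ

theorem inner_star_apply_right (X : H →L[𝕜] H) (ξ η : H) : ⟪ξ, star X η⟫_𝕜 = ⟪X ξ, η⟫_𝕜 :=
  ContinuousLinearMap.adjoint_inner_right X ξ η

theorem exists_inner_apply_eq_of_norm_le {E : Type*} [AddCommGroup E] [Module 𝕜 E]
    {e : E →ₗ[𝕜] H} (he : DenseRange e) (B : E →ₗ⋆[𝕜] E →ₗ[𝕜] 𝕜) {C : ℝ} (hC : 0 ≤ C)
    (hB : ∀ x y, ‖B x y‖ ≤ C * ‖e x‖ * ‖e y‖) :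
    ∃ T : H →L[𝕜] H, ∀ x y, ⟪e x, T (e y)⟫_𝕜 = B x y := by
  have extend_right (x y : E) : (B x).extendOfNorm e (e y) = B x y :=
    LinearMap.extendOfNorm_eq he ⟨_, hB x⟩ y
  let B' : E →ₗ⋆[𝕜] H →L[𝕜] 𝕜 :=
    { toFun := fun x => (B x).extendOfNorm e
      map_add' := fun x x' => clm_ext_of_denseRange he fun y => by
        rw [add_apply, extend_right, extend_right, extend_right, map_add, LinearMap.add_apply]
      map_smul' := fun c x => clm_ext_of_denseRange he fun y => by
        rw [smul_apply, extend_right, extend_right, map_smulₛₗ, LinearMap.smul_apply] }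
  have hB' (x : E) : ‖B' x‖ ≤ C * ‖e x‖ :=
    LinearMap.opNorm_extendOfNorm_le he (by positivity) (hB x)
  refine ⟨star (InnerProductSpace.continuousLinearMapOfBilin (B'.extendOfNorm e)), fun x y => ?_⟩
  rw [inner_star_apply_right, InnerProductSpace.continuousLinearMapOfBilin_apply,
    LinearMap.extendOfNorm_eq he ⟨C, hB'⟩]
  exact extend_right x y

end HilbertSpace

section AdjointGraph

variable {H : Type*} [NormedAddCommGroup H] [InnerProductSpace ℂ H]

theorem eq_zero_of_mem_adjoint_of_skewSwap_mem {G : Submodule ℂ (H × H)}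
    (hpos : ∀ u, (u, Complex.I • u) ∈ G.adjoint → u = 0)
    (hneg : ∀ u, (u, -Complex.I • u) ∈ G.adjoint → u = 0) {q : H × H} (hq : q ∈ G.adjoint)
    (hswap : (q.2, -q.1) ∈ G.adjoint) : q = 0 := by
  have hcomb (c : ℂ) (hc : c * c = -1) :
      (q.2 + c • q.1, c • (q.2 + c • q.1)) ∈ G.adjoint := by
    convert G.adjoint.add_mem hswap (G.adjoint.smul_mem c hq) using 1
    ext
    · rfl
    · simp [smul_add, smul_smul, hc, add_comm]
  have hplus := hpos _ (hcomb _ Complex.I_mul_I)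
  have hminus := hneg _ (hcomb (-Complex.I) (by rw [neg_mul_neg, Complex.I_mul_I]))
  have h1 : Complex.I • q.1 = 0 := by
    rw [neg_smul, ← sub_eq_add_neg, sub_eq_zero] at hminus
    rw [hminus, ← two_smul ℂ, smul_eq_zero] at hplus
    exact hplus.resolve_left two_ne_zero
  rw [h1, add_zero] at hplus
  exact Prod.ext ((smul_eq_zero.1 h1).resolve_left Complex.I_ne_zero) hplus

variable [CompleteSpace H]

theorem exists_add_mem_adjoint_adjoint (G : Submodule ℂ (H × H)) (x : H × H) :
    ∃ q p : H × H, x = q + p ∧ p ∈ G.adjoint.adjoint ∧ (q.2, -q.1) ∈ G.adjoint := by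
  let L : Submodule ℂ (WithLp 2 (H × H)) := G.map (WithLp.linearEquiv 2 ℂ (H × H)).symm.toLinearMap
  have hL (a b : H) (hab : (a, b) ∈ G) : WithLp.toLp 2 (a, b) ∈ L :=
    Submodule.mem_map_of_mem hab
  have : Lᗮ.HasOrthogonalProjection := .ofCompleteSpace Lᗮ
  obtain ⟨q, hq, p, hp, hx⟩ := Submodule.exists_add_mem_mem_orthogonal (K := Lᗮ) (WithLp.toLp 2 x)
  refine ⟨q.ofLp, p.ofLp, ?_, ?_, ?_⟩
  · exact congrArg WithLp.ofLp hx
  · refine (Submodule.mem_adjoint_iff _ _).2 fun a b hab => ?_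
    have hmem : WithLp.toLp 2 (b, -a) ∈ Lᗮ := by
      rintro _ ⟨⟨c, d⟩, hcd, rfl⟩
      have := (Submodule.mem_adjoint_iff _ _).1 hab c d hcd
      rw [WithLp.prod_inner_apply]
      change ⟪c, b⟫_ℂ + ⟪d, -a⟫_ℂ = 0
      rw [inner_neg_right]
      linear_combination -this
    have := hp _ hmem
    rw [WithLp.prod_inner_apply] at this
    change ⟪b, p.fst⟫_ℂ + ⟪-a, p.snd⟫_ℂ = 0 at this
    rwa [inner_neg_left, ← sub_eq_add_neg] at this
  · refine (Submodule.mem_adjoint_iff _ _).2 fun a b hab => ?_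
    have := hq _ (hL a b hab)
    rw [WithLp.prod_inner_apply] at this
    rw [inner_neg_right, sub_neg_eq_add, add_comm]
    exact this

-- Von Neumann's criterion for essential self-adjointness, in terms of graphs.
theorem adjoint_le_adjoint_adjoint {G : Submodule ℂ (H × H)} (hsymm : G ≤ G.adjoint)
    (hpos : ∀ u, (u, Complex.I • u) ∈ G.adjoint → u = 0)
    (hneg : ∀ u, (u, -Complex.I • u) ∈ G.adjoint → u = 0) : G.adjoint ≤ G.adjoint.adjoint := by
  intro x hx
  obtain ⟨q, p, rfl, hp, hq⟩ := exists_add_mem_adjoint_adjoint G x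
  have hp' : p ∈ G.adjoint := (Submodule.mem_adjoint_iff _ _).2 fun a b hab =>
    (Submodule.mem_adjoint_iff _ _).1 hp a b (hsymm hab)
  have hq' : q ∈ G.adjoint := by simpa only [add_sub_cancel_right] using G.adjoint.sub_mem hx hp'
  rwa [eq_zero_of_mem_adjoint_of_skewSwap_mem hpos hneg hq' hq, zero_add]

end AdjointGraph

/-- A conjugation of a complex Hilbert space: an antiunitary involution. -/
structure IsConjugation {H : Type*} [NormedAddCommGroup H] [InnerProductSpace ℂ H]
    (J : H → H) : Prop where
  map_add : ∀ ξ η, J (ξ + η) = J ξ + J η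
  map_smul : ∀ (z : ℂ) ξ, J (z • ξ) = starRingEnd ℂ z • J ξ
  inner_map_map : ∀ ξ η, ⟪J ξ, J η⟫_ℂ = ⟪η, ξ⟫_ℂ
  involutive : Function.Involutive J

namespace IsConjugation

variable {H : Type*} [NormedAddCommGroup H] [InnerProductSpace ℂ H] {J : H → H}

theorem norm_map (hJ : IsConjugation J) (ξ : H) : ‖J ξ‖ = ‖ξ‖ := by
  rw [norm_eq_sqrt_re_inner (𝕜 := ℂ), hJ.inner_map_map, ← norm_eq_sqrt_re_inner]

theorem inner_map_left (hJ : IsConjugation J) (ξ η : H) : ⟪J ξ, η⟫_ℂ = ⟪J η, ξ⟫_ℂ := by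
  rw [← hJ.inner_map_map ξ, hJ.involutive]

theorem inner_map_right (hJ : IsConjugation J) (ξ η : H) : ⟪ξ, J η⟫_ℂ = ⟪η, J ξ⟫_ℂ := by
  rw [← hJ.inner_map_map (J ξ), hJ.involutive]

/-- A conjugation as a bounded antilinear map. -/
def toCLM (hJ : IsConjugation J) : H →L⋆[ℂ] H :=
  LinearMap.mkContinuous { toFun := J, map_add' := hJ.map_add, map_smul' := hJ.map_smul } 1
    fun ξ => (one_mul ‖ξ‖).symm ▸ (hJ.norm_map ξ).le

theorem continuous (hJ : IsConjugation J) : Continuous J := hJ.toCLM.continuous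

variable [CompleteSpace H]

/-- The antilinear automorphism `X ↦ J X J` of the algebra of bounded operators. -/
def conj (hJ : IsConjugation J) : (H →L[ℂ] H) ≃⋆+* (H →L[ℂ] H) where
  toFun X := hJ.toCLM.comp (X.comp hJ.toCLM)
  invFun X := hJ.toCLM.comp (X.comp hJ.toCLM)
  left_inv X := by
    ext ξ
    change J (J (X (J (J ξ)))) = X ξ
    rw [hJ.involutive, hJ.involutive]
  right_inv X := by
    ext ξ
    change J (J (X (J (J ξ)))) = X ξ
    rw [hJ.involutive, hJ.involutive]
  map_mul' X Y := by
    ext ξ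
    change J (X (Y (J ξ))) = J (X (J (J (Y (J ξ)))))
    rw [hJ.involutive]
  map_add' X Y := by
    ext ξ
    exact hJ.map_add _ _
  map_star' X := by
    ext ξ
    refine ext_inner_left ℂ fun η => ?_
    rw [inner_star_apply_right]
    change ⟪η, J (star X (J ξ))⟫_ℂ = ⟪J (X (J η)), ξ⟫_ℂ
    rw [hJ.inner_map_right, hJ.inner_map_left, inner_star_apply_left]

theorem conj_apply (hJ : IsConjugation J) (X : H →L[ℂ] H) (ξ : H) :
    hJ.conj X ξ = J (X (J ξ)) := rfl

theorem conj_conj (hJ : IsConjugation J) (X : H →L[ℂ] H) : hJ.conj (hJ.conj X) = X :=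
  hJ.conj.left_inv X

theorem norm_conj_le (hJ : IsConjugation J) (X : H →L[ℂ] H) : ‖hJ.conj X‖ ≤ ‖X‖ :=
  ContinuousLinearMap.opNorm_le_bound _ (norm_nonneg X) fun ξ => by
    rw [conj_apply, hJ.norm_map, ← hJ.norm_map ξ]
    exact X.le_opNorm (J ξ)

theorem norm_conj (hJ : IsConjugation J) (X : H →L[ℂ] H) : ‖hJ.conj X‖ = ‖X‖ :=
  le_antisymm (hJ.norm_conj_le X) (by simpa only [conj_conj] using hJ.norm_conj_le (hJ.conj X))

theorem commute_conj_left (hJ : IsConjugation J) {X Y : H →L[ℂ] H} :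
    Commute (hJ.conj X) Y ↔ Commute X (hJ.conj Y) := by
  refine ⟨fun h => ?_, fun h => ?_⟩
  · simpa only [conj_conj] using h.map hJ.conj
  · simpa only [conj_conj] using h.map hJ.conj

end IsConjugation

section Representation

variable {H : Type*} [NormedAddCommGroup H] [InnerProductSpace ℂ H] [CompleteSpace H]
  (π : A →⋆ₐ[ℂ] (H →L[ℂ] H))

/-- The orbit map `a ↦ π(a) ξ` of a vector `ξ`. -/
def orbitMap (ξ : H) : A →L[ℂ] H :=
  LinearMap.mkContinuous
    { toFun := fun a => π a ξ
      map_add' := fun a b => by rw [map_add, add_apply]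
      map_smul' := fun c a => by rw [map_smul, smul_apply, RingHom.id_apply] }
    ‖ξ‖ fun a => (mul_comm ‖ξ‖ ‖a‖).symm ▸
      (π a).le_of_opNorm_le (NonUnitalStarAlgHom.norm_apply_le π a) ξ

variable {π}

theorem continuous_map_apply (ξ : H) : Continuous fun a => π a ξ := (orbitMap π ξ).continuous

theorem map_mul_apply (a b : A) (ξ : H) : π (a * b) ξ = π a (π b ξ) := by
  rw [map_mul, mul_apply_eq_comp]

theorem inner_map_star_left (a : A) (ξ η : H) : ⟪π (star a) ξ, η⟫_ℂ = ⟪ξ, π a η⟫_ℂ := by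
  rw [map_star, inner_star_apply_left]

theorem inner_map_star_right (a : A) (ξ η : H) : ⟪ξ, π (star a) η⟫_ℂ = ⟪π a ξ, η⟫_ℂ := by
  rw [map_star, inner_star_apply_right]

theorem commute_star_map {X : H →L[ℂ] H} (hX : ∀ a, Commute X (π a)) (a : A) :
    Commute (star X) (π a) := by
  simpa only [map_star, star_star] using (hX (star a)).star_star

theorem mem_envVN_iff_forall_commute {R : H →L[ℂ] H} :
    R ∈ envVN π ↔ ∀ X : H →L[ℂ] H, (∀ a, Commute X (π a)) → Commute X R := by
  simp only [envVN, Set.mem_centralizer_iff, Set.forall_mem_range, Commute, SemiconjBy, eq_comm]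

theorem eq_of_commute_of_apply_eq {Ω : H} (hΩ : DenseRange fun a => π a Ω) {X Y : H →L[ℂ] H}
    (hX : ∀ a, Commute X (π a)) (hY : ∀ a, Commute Y (π a)) (h : X Ω = Y Ω) : X = Y := by
  refine clm_ext_of_denseRange hΩ fun a => ?_
  have hXa := DFunLike.congr_fun (hX a).eq Ω
  have hYa := DFunLike.congr_fun (hY a).eq Ω
  rw [mul_apply_eq_comp, mul_apply_eq_comp] at hXa hYa
  rw [hXa, hYa, h]

theorem denseRange_analytic_map_apply (d : Dynamics A) {Ω : H} (hΩ : DenseRange fun a => π a Ω) :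
    DenseRange fun a : {a : A | ∃ f, d.IsAnalyticExt a f} => π a Ω :=
  hΩ.comp d.dense_setOf_isAnalyticExt.denseRange_val (continuous_map_apply Ω)

end Representation

section ModularTheory

open Complex (I)

variable {H : Type*} [NormedAddCommGroup H] [InnerProductSpace ℂ H] [CompleteSpace H]

/-- `J` is the modular conjugation of `(π(A)'', Ω)`, where `Ω` implements a KMS state. It is encoded
by its action `J π(α_{iβ/2}(a)) Ω = π(a*) Ω` on the vectors of entire analytic elements `a`. -/
structure IsModularConjugation (d : Dynamics A) (β : ℝ) (π : A →⋆ₐ[ℂ] (H →L[ℂ] H)) (Ω : H)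
    (J : H → H) : Prop extends IsConjugation J where
  map_analytic : ∀ (a : A) (f : ℂ → A), d.IsAnalyticExt a f →
    J (π (f (I * β / 2)) Ω) = π (star a) Ω

/-- The graph of the modular operator `Δ^{1/2}` on the entire analytic vectors, where
`Δ^{1/2} π(a) Ω = π(α_{iβ/2}(a)) Ω`. -/
def modularGraph (d : Dynamics A) (β : ℝ) (π : A →⋆ₐ[ℂ] (H →L[ℂ] H)) (Ω : H) :
    Submodule ℂ (H × H) where
  carrier := {p | ∃ a f, d.IsAnalyticExt a f ∧ (π a Ω, π (f (I * β / 2)) Ω) = p}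
  add_mem' := by
    rintro _ _ ⟨a, f, hf, rfl⟩ ⟨b, g, hg, rfl⟩
    exact ⟨_, _, hf.add hg, by simp only [map_add, add_apply, Prod.mk_add_mk]⟩
  zero_mem' := ⟨_, _, .zero, by simp only [map_zero, zero_apply, Prod.mk_zero_zero]⟩
  smul_mem' := by
    rintro c _ ⟨a, f, hf, rfl⟩
    exact ⟨_, _, hf.smul c, by simp only [map_smul, smul_apply, Prod.smul_mk]⟩

variable {d : Dynamics A} {β : ℝ} {π : A →⋆ₐ[ℂ] (H →L[ℂ] H)} {Ω : H} {J : H → H}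

theorem mem_adjoint_modularGraph {p : H × H} :
    p ∈ (modularGraph d β π Ω).adjoint ↔ ∀ a f, d.IsAnalyticExt a f →
      ⟪π (f (I * β / 2)) Ω, p.1⟫_ℂ = ⟪π a Ω, p.2⟫_ℂ := by
  rw [Submodule.mem_adjoint_iff]
  refine ⟨fun h a f hf => sub_eq_zero.1 (h _ _ ⟨a, f, hf, rfl⟩), ?_⟩
  rintro h _ _ ⟨a, f, hf, heq⟩
  obtain ⟨rfl, rfl⟩ := Prod.mk.inj heq
  exact sub_eq_zero.2 (h a f hf)

theorem eq_zero_of_mem_adjoint_modularGraph (hΩ : DenseRange fun a => π a Ω) {c : ℂ}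
    (hc : ‖c‖ = 1) (hc1 : c ≠ 1) {u : H} (hu : (u, c • u) ∈ (modularGraph d β π Ω).adjoint) :
    u = 0 := by
  have hu_orbit (a : A) (f : ℂ → A) (hf : d.IsAnalyticExt a f) :
      ⟪u, π (f (I * β / 2)) Ω⟫_ℂ = starRingEnd ℂ c * ⟪u, π a Ω⟫_ℂ := by
    rw [← inner_conj_symm, mem_adjoint_modularGraph.1 hu a f hf, inner_smul_right, map_mul,
      inner_conj_symm]
  refine (denseRange_analytic_map_apply d hΩ).eq_zero_of_inner_left ℂ ?_
  rintro ⟨a, f, hf⟩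
  have hconst : ⟪u, π (f (I * β / 2)) Ω⟫_ℂ = ⟪u, π a Ω⟫_ℂ := by
    have := hf.apply_eq_of_quasiperiodic ((innerSL ℂ u).comp (orbitMap π Ω)) (κ := β / 2)
      (c := starRingEnd ℂ c) (by rwa [RCLike.norm_conj]) (fun z => ?_) 1
    · rw [mul_one, Complex.ofReal_div, Complex.ofReal_ofNat, ← mul_div_assoc] at this
      exact this
    · rw [Complex.ofReal_div, Complex.ofReal_ofNat, ← mul_div_assoc]
      exact hu_orbit _ _ (hf.shift z)
  have hzero : (starRingEnd ℂ c - 1) * ⟪u, π a Ω⟫_ℂ = 0 := by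
    rw [sub_one_mul, ← hu_orbit a f hf, hconst, sub_self]
  refine (mul_eq_zero.1 hzero).resolve_left fun h => hc1 ?_
  rw [← Complex.conj_conj c, sub_eq_zero.1 h, map_one]

namespace IsModularConjugation

theorem map_cyclic (hJ : IsModularConjugation d β π Ω J) : J Ω = Ω := by
  simpa only [map_one, star_one, one_apply_eq_self] using hJ.map_analytic 1 _ .one

theorem map_star (hJ : IsModularConjugation d β π Ω J) {a : A} {f : ℂ → A}
    (hf : d.IsAnalyticExt a f) : J (π (star a) Ω) = π (f (I * β / 2)) Ω := by
  rw [← hJ.map_analytic a f hf, hJ.involutive]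

theorem map_apply (hJ : IsModularConjugation d β π Ω J) {a : A} {f : ℂ → A}
    (hf : d.IsAnalyticExt a f) : J (π a Ω) = π (star (f (-(I * β / 2)))) Ω := by
  simpa only [neg_add_cancel, hf.apply_zero] using hJ.map_analytic _ _ (hf.shift (-(I * β / 2)))

theorem inner_apply_eq (hJ : IsModularConjugation d β π Ω J) {a : A} {f : ℂ → A}
    (hf : d.IsAnalyticExt a f) : ⟪Ω, π (f (I * β / 2)) Ω⟫_ℂ = ⟪Ω, π a Ω⟫_ℂ := by
  rw [← hJ.inner_map_map, hJ.map_analytic a f hf, hJ.map_cyclic, inner_map_star_left]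

theorem inner_apply_comm (hJ : IsModularConjugation d β π Ω J) {a b : A} {f g : ℂ → A}
    (hf : d.IsAnalyticExt a f) (hg : d.IsAnalyticExt b g) :
    ⟪π (f (I * β / 2)) Ω, π b Ω⟫_ℂ = ⟪π a Ω, π (g (I * β / 2)) Ω⟫_ℂ := by
  have hconj : starRingEnd ℂ (I * β / 2) = -(I * β / 2) := by
    rw [map_div₀, map_mul, Complex.conj_I, Complex.conj_ofReal, Complex.conj_ofNat, neg_mul,
      neg_div]
  have hinv := hJ.inner_apply_eq ((hg.shift (-(I * β / 2))).mul hf.star)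
  simp only [neg_add_cancel, hg.apply_zero, hconj] at hinv
  calc ⟪π (f (I * β / 2)) Ω, π b Ω⟫_ℂ
      = ⟪π (star (g (-(I * β / 2)))) Ω, π (star a) Ω⟫_ℂ := by
        rw [← hJ.map_apply hg, ← hJ.map_analytic a f hf, hJ.inner_map_map]
    _ = ⟪Ω, π (g (-(I * β / 2)) * star a) Ω⟫_ℂ := by rw [inner_map_star_left, map_mul_apply]
    _ = ⟪Ω, π (b * star (f (-(I * β / 2)))) Ω⟫_ℂ := hinv.symm
    _ = ⟪J (π (g (I * β / 2)) Ω), J (π a Ω)⟫_ℂ := by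
        rw [map_mul_apply, ← inner_map_star_left, hJ.map_analytic b g hg, hJ.map_apply hf]
    _ = ⟪π a Ω, π (g (I * β / 2)) Ω⟫_ℂ := hJ.inner_map_map _ _

theorem modularGraph_le_adjoint (hJ : IsModularConjugation d β π Ω J) :
    modularGraph d β π Ω ≤ (modularGraph d β π Ω).adjoint := by
  rintro _ ⟨b, g, hg, rfl⟩
  exact mem_adjoint_modularGraph.2 fun a f hf => hJ.inner_apply_comm hf hg

theorem adjoint_modularGraph_le (hJ : IsModularConjugation d β π Ω J)
    (hΩ : DenseRange fun a => π a Ω) :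
    (modularGraph d β π Ω).adjoint ≤ (modularGraph d β π Ω).adjoint.adjoint := by
  have hI (c : ℂ) (hc : c.re = 0) : c ≠ 1 := fun h => by simp [h] at hc
  exact adjoint_le_adjoint_adjoint hJ.modularGraph_le_adjoint
    (fun _ => eq_zero_of_mem_adjoint_modularGraph hΩ Complex.norm_I (hI _ Complex.I_re))
    (fun _ => eq_zero_of_mem_adjoint_modularGraph hΩ (by simp) (hI _ (by simp)))

theorem conj_map_star_apply (hJ : IsModularConjugation d β π Ω J) {a : A} {f : ℂ → A}
    (hf : d.IsAnalyticExt a f) (b : A) :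
    hJ.conj (π (star a)) (π b Ω) = π (b * f (I * β / 2)) Ω := by
  refine d.dense_setOf_isAnalyticExt.induction
    (P := fun b => hJ.conj (π (star a)) (π b Ω) = π (b * f (I * β / 2)) Ω) ?_ ?_ b
  · rintro b ⟨g, hg⟩
    have hmul := hJ.map_star ((hg.shift (-(I * β / 2))).mul hf)
    rwa [neg_add_cancel, hg.apply_zero, star_mul, map_mul_apply, ← hJ.map_apply hg] at hmul
  · exact isClosed_eq ((hJ.conj _).continuous.comp (continuous_map_apply Ω))
      ((continuous_map_apply Ω).comp (continuous_mul_const _))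

theorem commute_conj_map_map (hJ : IsModularConjugation d β π Ω J)
    (hΩ : DenseRange fun a => π a Ω) (a b : A) : Commute (hJ.conj (π a)) (π b) := by
  refine clm_ext_of_denseRange hΩ fun c => ?_
  change J (π a (J (π b (π c Ω)))) = π b (J (π a (J (π c Ω))))
  refine d.dense_setOf_isAnalyticExt.induction
    (P := fun a => J (π a (J (π b (π c Ω)))) = π b (J (π a (J (π c Ω))))) ?_ ?_ a
  · rintro a ⟨f, hf⟩
    have happly := hJ.conj_map_star_apply hf.star
    simp only [star_star, IsConjugation.conj_apply] at happly
    rw [← map_mul_apply, happly, happly, mul_assoc, map_mul_apply]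
  · exact isClosed_eq (hJ.continuous.comp (continuous_map_apply _))
      ((π b).continuous.comp (hJ.continuous.comp (continuous_map_apply _)))

theorem mem_adjoint_modularGraph_of_commute (hJ : IsModularConjugation d β π Ω J)
    {X : H →L[ℂ] H} (hX : ∀ a, Commute X (π a)) :
    (J (star X Ω), X Ω) ∈ (modularGraph d β π Ω).adjoint :=
  mem_adjoint_modularGraph.2 fun a f hf =>
    calc ⟪π (f (I * β / 2)) Ω, J (star X Ω)⟫_ℂ
        = ⟪Ω, (X * π (star a)) Ω⟫_ℂ := by
          rw [hJ.inner_map_right, hJ.map_analytic a f hf, inner_star_apply_left,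
            mul_apply_eq_comp]
      _ = ⟪π a Ω, X Ω⟫_ℂ := by
          rw [(hX _).eq, mul_apply_eq_comp, inner_map_star_right]

theorem mem_adjoint_modularGraph_of_commute_conj (hJ : IsModularConjugation d β π Ω J)
    {Y : H →L[ℂ] H} (hY : ∀ a, Commute (hJ.conj (π a)) Y) :
    (Y Ω, J (star Y Ω)) ∈ (modularGraph d β π Ω).adjoint :=
  mem_adjoint_modularGraph.2 fun a f hf =>
    calc ⟪π (f (I * β / 2)) Ω, Y Ω⟫_ℂ
        = ⟪Ω, (hJ.conj (π a) * Y) Ω⟫_ℂ := by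
          rw [mul_apply_eq_comp, ← inner_star_apply_left (hJ.conj (π a)), ← StarHomClass.map_star,
            ← StarHomClass.map_star, IsConjugation.conj_apply, hJ.map_cyclic, hJ.map_star hf]
      _ = ⟪π a Ω, J (star Y Ω)⟫_ℂ := by
          rw [(hY a).eq, mul_apply_eq_comp, IsConjugation.conj_apply, hJ.map_cyclic,
            ← inner_star_apply_left, hJ.inner_map_right]

theorem inner_apply_apply_of_commute (hJ : IsModularConjugation d β π Ω J)
    (hΩ : DenseRange fun a => π a Ω) {X Y : H →L[ℂ] H} (hX : ∀ a, Commute X (π a))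
    (hY : ∀ a, Commute (hJ.conj (π a)) Y) : ⟪X Ω, Y Ω⟫_ℂ = ⟪star Y Ω, star X Ω⟫_ℂ := by
  rw [← hJ.inner_map_map (star X Ω)]
  exact sub_eq_zero.1 <| (Submodule.mem_adjoint_iff _ _).1
    (hJ.adjoint_modularGraph_le hΩ (hJ.mem_adjoint_modularGraph_of_commute_conj hY)) _ _
    (hJ.mem_adjoint_modularGraph_of_commute hX)

theorem mem_envVN_of_commute_conj (hJ : IsModularConjugation d β π Ω J)
    (hΩ : DenseRange fun a => π a Ω) {Y : H →L[ℂ] H} (hY : ∀ a, Commute (hJ.conj (π a)) Y) :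
    Y ∈ envVN π := by
  refine mem_envVN_iff_forall_commute.2 fun X hX => clm_ext_of_denseRange hΩ fun b => ?_
  have hdense : DenseRange fun c => hJ.conj (π c) Ω := by
    simp only [IsConjugation.conj_apply, hJ.map_cyclic]
    exact hJ.involutive.surjective.denseRange.comp hΩ hJ.continuous
  refine hdense.eq_of_inner_right ℂ fun c => ?_
  have hcomm (a : A) : Commute (star X * hJ.conj (π c)) (π a) :=
    (commute_star_map hX a).mul_left (hJ.commute_conj_map_map hΩ c a)
  have hcomm' (a : A) : Commute (hJ.conj (π a)) (Y * π b) :=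
    (hY a).mul_right (hJ.commute_conj_map_map hΩ a b)
  have hstar : star (hJ.conj (π c)) = hJ.conj (π (star c)) := by
    rw [StarHomClass.map_star π, StarHomClass.map_star hJ.conj]
  have hswap : Y * π b * (star (hJ.conj (π c)) * X) = star (hJ.conj (π c)) * (Y * X * π b) := by
    rw [hstar, ← mul_assoc, ← (hcomm' (star c)).eq, mul_assoc, mul_assoc Y, ← (hX b).eq,
      mul_assoc Y]
  calc ⟪hJ.conj (π c) Ω, (X * Y) (π b Ω)⟫_ℂ
      = ⟪(star X * hJ.conj (π c)) Ω, (Y * π b) Ω⟫_ℂ := by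
        simp only [mul_apply_eq_comp, inner_star_apply_left]
    _ = ⟪Ω, (Y * π b * (star (hJ.conj (π c)) * X)) Ω⟫_ℂ := by
        rw [hJ.inner_apply_apply_of_commute hΩ hcomm hcomm', inner_star_apply_left, star_mul,
          star_star, mul_apply_eq_comp (Y * π b)]
    _ = ⟪hJ.conj (π c) Ω, (Y * X) (π b Ω)⟫_ℂ := by
        rw [hswap, mul_apply_eq_comp, inner_star_apply_right, mul_apply_eq_comp]

theorem mem_envVN_iff (hJ : IsModularConjugation d β π Ω J) (hΩ : DenseRange fun a => π a Ω)
    {R : H →L[ℂ] H} : R ∈ envVN π ↔ ∀ a, Commute (hJ.conj R) (π a) := by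
  refine ⟨fun hR a => hJ.commute_conj_left.2 ?_, fun hR => hJ.mem_envVN_of_commute_conj hΩ ?_⟩
  · exact (mem_envVN_iff_forall_commute.1 hR _ (hJ.commute_conj_map_map hΩ a)).symm
  · exact fun a => (hJ.commute_conj_left.1 (hR a)).symm

end IsModularConjugation

end ModularTheory

section VectorFunctional

variable {H : Type*} [NormedAddCommGroup H] [InnerProductSpace ℂ H] [CompleteSpace H]
  (π : A →⋆ₐ[ℂ] (H →L[ℂ] H)) (Ω : H)

/-- The functional `a ↦ ⟨Ω, π(a) R Ω⟩` of an operator `R`. -/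
def vectorFunctional (R : H →L[ℂ] H) : A →L[ℂ] ℂ :=
  (innerSL ℂ Ω).comp (orbitMap π (R Ω))

theorem vectorFunctional_apply (R : H →L[ℂ] H) (a : A) :
    vectorFunctional π Ω R a = ⟪Ω, π a (R Ω)⟫_ℂ := rfl

theorem vectorFunctional_add (R R' : H →L[ℂ] H) :
    vectorFunctional π Ω (R + R') = vectorFunctional π Ω R + vectorFunctional π Ω R' := by
  ext a
  simp only [vectorFunctional_apply, add_apply, map_add, inner_add_right]

theorem vectorFunctional_smul (c : ℂ) (R : H →L[ℂ] H) :
    vectorFunctional π Ω (c • R) = c • vectorFunctional π Ω R := by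
  ext a
  simp only [vectorFunctional_apply, smul_apply, map_smul, inner_smul_right, smul_eq_mul]

variable {π Ω} {T : H →L[ℂ] H} {ω ρ : A → ℂ}

theorem apply_cyclic_eq_of_vectorFunctional_eq (hΩ : DenseRange fun a => π a Ω) {R R' : H →L[ℂ] H}
    (h : ∀ a, vectorFunctional π Ω R a = vectorFunctional π Ω R' a) : R Ω = R' Ω :=
  hΩ.eq_of_inner_right ℂ fun a => by
    simpa only [vectorFunctional_apply, inner_map_star_right] using h (star a)

theorem vectorFunctional_star_mul (hT : ∀ a, Commute T (π a)) (a b : A) :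
    vectorFunctional π Ω T (star a * b) = ⟪π a Ω, T (π b Ω)⟫_ℂ := by
  rw [vectorFunctional_apply, map_mul_apply, inner_map_star_right, ← mul_apply_eq_comp (π b),
    ← (hT b).eq, mul_apply_eq_comp]

theorem isHermitian_vectorFunctional_iff (hΩ : DenseRange fun a => π a Ω)
    (hT : ∀ a, Commute T (π a)) : IsHermitian (vectorFunctional π Ω T) ↔ star T = T := by
  have hconj (a : A) : starRingEnd ℂ (vectorFunctional π Ω T a) =
      vectorFunctional π Ω (star T) (star a) := by
    have hTa := vectorFunctional_star_mul (Ω := Ω) hT 1 a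
    rw [star_one, one_mul, map_one, one_apply_eq_self] at hTa
    rw [hTa, inner_conj_symm, vectorFunctional_apply, inner_map_star_right, inner_star_apply_right]
  refine ⟨fun h => ?_, fun h a => by rw [hconj, h]⟩
  refine eq_of_commute_of_apply_eq hΩ (commute_star_map hT) hT
    (apply_cyclic_eq_of_vectorFunctional_eq hΩ fun a => ?_)
  rw [← star_star a, ← hconj, ← h]

theorem dominated_iff_norm_le (hω : ∀ a, ω a = ⟪Ω, π a Ω⟫_ℂ) :
    Dominated ω ρ ↔ ∀ a b, ‖ρ (star a * b)‖ ≤ ‖π a Ω‖ * ‖π b Ω‖ := by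
  have hnorm (a : A) : ω (star a * a) = (‖π a Ω‖ : ℂ) ^ 2 := by
    rw [hω, map_mul_apply, inner_map_star_right, inner_self_eq_norm_sq_to_K]
    rfl
  refine forall₂_congr fun a b => ?_
  rw [hnorm, hnorm, ← mul_pow, ← sq_le_sq₀ (norm_nonneg _) (by positivity)]
  norm_cast

theorem dominated_vectorFunctional_iff (hΩ : DenseRange fun a => π a Ω)
    (hω : ∀ a, ω a = ⟪Ω, π a Ω⟫_ℂ) (hT : ∀ a, Commute T (π a)) :
    Dominated ω (vectorFunctional π Ω T) ↔ ‖T‖ ≤ 1 := by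
  simp only [dominated_iff_norm_le hω, vectorFunctional_star_mul hT]
  refine ⟨fun h => ?_, fun h a b => ?_⟩
  · have hbound (ξ η : H) : ‖⟪ξ, T η⟫_ℂ‖ ≤ ‖ξ‖ * ‖η‖ :=
      hΩ.induction_on₂ (isClosed_le (by fun_prop) (by fun_prop)) h ξ η
    refine ContinuousLinearMap.opNorm_le_of_re_inner_le (𝕜 := ℂ) zero_le_one fun ξ η hξ hη => ?_
    calc RCLike.re ⟪T ξ, η⟫_ℂ ≤ ‖⟪T ξ, η⟫_ℂ‖ := RCLike.re_le_norm _
      _ = ‖⟪η, T ξ⟫_ℂ‖ := norm_inner_symm _ _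
      _ ≤ ‖η‖ * ‖ξ‖ := hbound η ξ
      _ = 1 := by rw [hξ, hη, one_mul]
  · calc ‖⟪π a Ω, T (π b Ω)⟫_ℂ‖ ≤ ‖π a Ω‖ * ‖T (π b Ω)‖ := norm_inner_le_norm _ _
      _ ≤ ‖π a Ω‖ * ‖π b Ω‖ := by
        gcongr
        simpa only [one_mul] using T.le_of_opNorm_le h (π b Ω)

theorem exists_vectorFunctional_eq (hΩ : DenseRange fun a => π a Ω)
    (hω : ∀ a, ω a = ⟪Ω, π a Ω⟫_ℂ) (hρ : IsLinearMap ℂ ρ) (hdom : Dominated ω ρ) :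
    ∃ T : H →L[ℂ] H, (∀ a, Commute T (π a)) ∧ ⇑(vectorFunctional π Ω T) = ρ := by
  let B : A →ₗ⋆[ℂ] A →ₗ[ℂ] ℂ := LinearMap.mk₂'ₛₗ (starRingEnd ℂ) (RingHom.id ℂ)
    (fun a b => ρ (star a * b))
    (fun a a' b => by rw [star_add, add_mul, hρ.map_add])
    (fun c a b => by rw [star_smul, smul_mul_assoc, hρ.map_smul]; rfl)
    (fun a b b' => by rw [mul_add, hρ.map_add])
    (fun c a b => by rw [mul_smul_comm, hρ.map_smul]; rfl)
  obtain ⟨T, hTB⟩ := exists_inner_apply_eq_of_norm_le (e := (orbitMap π Ω).toLinearMap) hΩ B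
    zero_le_one (fun a b => (one_mul ‖π a Ω‖).symm ▸ (dominated_iff_norm_le hω).1 hdom a b)
  have hinner (a b : A) : ⟪π a Ω, T (π b Ω)⟫_ℂ = ρ (star a * b) := hTB a b
  have hT (a : A) : Commute T (π a) := by
    refine clm_ext_of_denseRange hΩ fun b => hΩ.eq_of_inner_right ℂ fun c => ?_
    rw [mul_apply_eq_comp, mul_apply_eq_comp, ← inner_map_star_left, ← map_mul_apply,
      ← map_mul_apply, hinner, hinner, star_mul, star_star, mul_assoc]
  refine ⟨T, hT, funext fun b => ?_⟩
  rw [← one_mul b, ← star_one, vectorFunctional_star_mul hT, hinner]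

end VectorFunctional

section TwistedCenter

open Complex (I)

variable {H : Type*} [NormedAddCommGroup H] [InnerProductSpace ℂ H] [CompleteSpace H]

/-- `V` is the canonical involutive implementation of the automorphism `γ` fixing `Ω`. -/
structure IsImplementation (π : A →⋆ₐ[ℂ] (H →L[ℂ] H)) (Ω : H) (γ : A ≃⋆ₐ[ℂ] A)
    (V : H →L[ℂ] H) : Prop where
  involutive : ∀ ξ, V (V ξ) = ξ
  map_cyclic : V Ω = Ω
  map_map : ∀ (a : A) (ξ : H), V (π a (V ξ)) = π (γ a) ξ

/-- The selfadjoint elements of norm at most `1` of the `V`-twisted center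
`{R ∈ π(A)'' : J R* J = R V}`. -/
def selfAdjointTwistedCenterBall (π : A →⋆ₐ[ℂ] (H →L[ℂ] H)) (J : H → H) (V : H →L[ℂ] H) :
    Set (H →L[ℂ] H) :=
  {R | R ∈ envVN π ∧ (∀ ξ, J (star R (J ξ)) = R (V ξ)) ∧ star R = R ∧ ‖R‖ ≤ 1}

variable {d : Dynamics A} {γ : A ≃⋆ₐ[ℂ] A} {β : ℝ} {π : A →⋆ₐ[ℂ] (H →L[ℂ] H)} {Ω : H} {J : H → H}
  {V T : H →L[ℂ] H} {ω : A → ℂ}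

theorem IsImplementation.map_map_cyclic (hV : IsImplementation π Ω γ V) (a : A) :
    V (π a Ω) = π (γ a) Ω := by
  simpa only [hV.map_cyclic] using hV.map_map a Ω

theorem convex_selfAdjointTwistedCenterBall (hJ : IsConjugation J) :
    Convex ℝ (selfAdjointTwistedCenterBall π J V) := by
  rintro R ⟨hR, hRV, hRstar, hRnorm⟩ R' ⟨hR', hRV', hRstar', hRnorm'⟩ s t hs ht hst
  have hstar : star (s • R + t • R') = s • R + t • R' := by
    rw [star_add, star_smul, star_smul, star_trivial s, star_trivial t, hRstar, hRstar']
  refine ⟨?_, fun ξ => ?_, ?_, ?_⟩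
  · rw [mem_envVN_iff_forall_commute] at hR hR' ⊢
    exact fun X hX => ((hR X hX).smul_right s).add_right ((hR' X hX).smul_right t)
  · simp only [hRstar, hRstar'] at hRV hRV'
    rw [hstar]
    simp only [add_apply, smul_apply, hJ.map_add, ← hRV, ← hRV', ← Complex.coe_smul,
      hJ.map_smul, Complex.conj_ofReal]
  · exact hstar
  · rw [← mem_closedBall_zero_iff] at hRnorm hRnorm' ⊢
    exact convex_closedBall 0 1 hRnorm hRnorm' hs ht hst

theorem Dynamics.IsTwistedKMS.apply_half {φ : A →L[ℂ] ℂ} (hφ : d.IsTwistedKMS γ β φ) {a : A}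
    {f : ℂ → A} (hf : d.IsAnalyticExt a f) : φ (f (I * β / 2)) = φ a := by
  have hper (z : ℂ) : φ (f (z + I * β)) = (1 : ℂ) • φ (f z) := by
    simpa only [one_mul, map_one, mul_one, one_smul] using hφ.2 1 (f z) _ _ .one (hf.shift z)
  exact mul_one_div (I * β) (2 : ℂ) ▸ hf.apply_eq_of_quasiperiodic φ norm_one hper (1 / 2)

theorem apply_neg_half_mul_half {φ : A → ℂ}
    (hφ : ∀ a f, d.IsAnalyticExt a f → φ (f (I * β / 2)) = φ a) {a b : A} {f g : ℂ → A}
    (hf : d.IsAnalyticExt a f) (hg : d.IsAnalyticExt b g) :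
    φ (f (-(I * β / 2)) * g (I * β / 2)) = φ (a * g (I * β)) := by
  have := hφ _ _ ((hf.shift (-(I * β / 2))).mul (hg.shift (I * β / 2)))
  rw [neg_add_cancel, hf.apply_zero, add_halves] at this
  exact this.symm

namespace IsModularConjugation

theorem inner_conj_map_apply (hJ : IsModularConjugation d β π Ω J) (hT : ∀ a, Commute T (π a))
    (hTstar : star T = T) {a b : A} {f g : ℂ → A} (hf : d.IsAnalyticExt a f)
    (hg : d.IsAnalyticExt b g) :
    ⟪π (star b) Ω, hJ.conj T (π a Ω)⟫_ℂ =
      vectorFunctional π Ω T (f (-(I * β / 2)) * g (I * β / 2)) := by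
  have hmul := vectorFunctional_star_mul (Ω := Ω) hT (star (f (-(I * β / 2)))) (g (I * β / 2))
  rw [star_star] at hmul
  rw [IsConjugation.conj_apply, hJ.inner_map_right, hJ.map_star hg, hJ.map_apply hf, hmul,
    ← inner_star_apply_left T, hTstar]

theorem mul_eq_conj_iff (hJ : IsModularConjugation d β π Ω J) (hΩ : DenseRange fun a => π a Ω)
    (hV : IsImplementation π Ω γ V) (hT : ∀ a, Commute T (π a)) (hTstar : star T = T) :
    T * V = hJ.conj T ↔ ∀ a b f g, d.IsAnalyticExt a f → d.IsAnalyticExt b g →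
      vectorFunctional π Ω T (f (-(I * β / 2)) * g (I * β / 2)) =
        vectorFunctional π Ω T (b * γ a) := by
  have hinner (a b : A) : ⟪π (star b) Ω, (T * V) (π a Ω)⟫_ℂ = vectorFunctional π Ω T (b * γ a) := by
    rw [mul_apply_eq_comp, hV.map_map_cyclic, ← vectorFunctional_star_mul hT, star_star]
  refine ⟨fun h a b f g hf hg => ?_, fun h => ?_⟩
  · rw [← hJ.inner_conj_map_apply hT hTstar hf hg, ← h, hinner]
  · refine clm_ext_of_denseRange (denseRange_analytic_map_apply d hΩ) ?_
    rintro ⟨a, f, hf⟩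
    refine (denseRange_analytic_map_apply d hΩ).eq_of_inner_right ℂ ?_
    rintro ⟨b, g, hg⟩
    change ⟪π b Ω, (T * V) (π a Ω)⟫_ℂ = ⟪π b Ω, hJ.conj T (π a Ω)⟫_ℂ
    rw [← star_star b, hinner, hJ.inner_conj_map_apply hT hTstar hf hg.star, h _ _ _ _ hf hg.star]

theorem isTwistedKMS_vectorFunctional_iff (hJ : IsModularConjugation d β π Ω J)
    (hΩ : DenseRange fun a => π a Ω) (hV : IsImplementation π Ω γ V) (hT : ∀ a, Commute T (π a))
    (hTstar : star T = T) :
    d.IsTwistedKMS γ β (vectorFunctional π Ω T) ↔ T * V = hJ.conj T := by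
  rw [hJ.mul_eq_conj_iff hΩ hV hT hTstar]
  refine ⟨fun h a b f g hf hg => ?_, fun h => ⟨(vectorFunctional π Ω T).toLinearMap.isLinear,
    fun a b f g hf hg => ?_⟩⟩
  · rw [apply_neg_half_mul_half (fun _ _ => h.apply_half) hf hg, h.2 a b f g hf hg]
  · have hhalf (c : A) (u : ℂ → A) (hu : d.IsAnalyticExt c u) :
        vectorFunctional π Ω T (u (I * β / 2)) = vectorFunctional π Ω T c := by
      simpa only [one_mul, map_one, mul_one] using h 1 c _ u .one hu
    rw [← apply_neg_half_mul_half hhalf hf hg, h a b f g hf hg]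

theorem twistedKMSDom_vectorFunctional_iff (hJ : IsModularConjugation d β π Ω J)
    (hΩ : DenseRange fun a => π a Ω) (hω : ∀ a, ω a = ⟪Ω, π a Ω⟫_ℂ)
    (hV : IsImplementation π Ω γ V) (hT : ∀ a, Commute T (π a)) :
    TwistedKMSDom d γ β ω (vectorFunctional π Ω T) ↔ T * V = hJ.conj T ∧ star T = T ∧ ‖T‖ ≤ 1 := by
  rw [TwistedKMSDom, isHermitian_vectorFunctional_iff hΩ hT,
    dominated_vectorFunctional_iff hΩ hω hT]
  exact and_congr_left fun h => hJ.isTwistedKMS_vectorFunctional_iff hΩ hV hT h.1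

theorem conj_mem_selfAdjointTwistedCenterBall_iff (hJ : IsModularConjugation d β π Ω J)
    (hΩ : DenseRange fun a => π a Ω) (hV : IsImplementation π Ω γ V) (hT : ∀ a, Commute T (π a)) :
    hJ.conj T ∈ selfAdjointTwistedCenterBall π J V ↔
      T * V = hJ.conj T ∧ star T = T ∧ ‖T‖ ≤ 1 := by
  have hmem : hJ.conj T ∈ envVN π := (hJ.mem_envVN_iff hΩ).2 (by rwa [IsConjugation.conj_conj])
  have hstar : star (hJ.conj T) = hJ.conj T ↔ star T = T := by
    rw [← StarHomClass.map_star hJ.conj, (EquivLike.injective hJ.conj).eq_iff]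
  simp only [selfAdjointTwistedCenterBall, Set.mem_ofPred_eq, hmem, true_and, hstar, hJ.norm_conj]
  refine and_congr_left fun h => ?_
  simp only [hstar.2 h.1, ← hJ.conj_apply, IsConjugation.conj_conj]
  refine ⟨fun h => ?_, fun h ξ => ?_⟩
  · ext ξ
    rw [mul_apply_eq_comp, h, hV.involutive]
  · rw [← h, mul_apply_eq_comp, hV.involutive]

theorem vectorFunctional_conj (hJ : IsModularConjugation d β π Ω J)
    (hV : IsImplementation π Ω γ V) (hTV : T * V = hJ.conj T) :
    vectorFunctional π Ω (hJ.conj T) = vectorFunctional π Ω T := by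
  rw [vectorFunctional, ← hTV, mul_apply_eq_comp, hV.map_cyclic, vectorFunctional]

theorem injOn_vectorFunctional (hJ : IsModularConjugation d β π Ω J)
    (hΩ : DenseRange fun a => π a Ω) :
    Set.InjOn (fun R => ⇑(vectorFunctional π Ω R)) (envVN π) := by
  intro R hR R' hR' h
  have hΩR : R Ω = R' Ω := apply_cyclic_eq_of_vectorFunctional_eq hΩ (congrFun h)
  refine EquivLike.injective hJ.conj (eq_of_commute_of_apply_eq hΩ ((hJ.mem_envVN_iff hΩ).1 hR)
    ((hJ.mem_envVN_iff hΩ).1 hR') ?_)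
  rw [hJ.conj_apply, hJ.conj_apply, hJ.map_cyclic, hΩR]

theorem bijOn_vectorFunctional (hJ : IsModularConjugation d β π Ω J)
    (hΩ : DenseRange fun a => π a Ω) (hω : ∀ a, ω a = ⟪Ω, π a Ω⟫_ℂ)
    (hV : IsImplementation π Ω γ V) :
    Set.BijOn (fun R => ⇑(vectorFunctional π Ω R)) (selfAdjointTwistedCenterBall π J V)
      {ρ | TwistedKMSDom d γ β ω ρ} := by
  refine ⟨fun R hR => ?_, (hJ.injOn_vectorFunctional hΩ).mono fun R hR => hR.1, fun ρ hρ => ?_⟩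
  · obtain ⟨T, rfl⟩ := EquivLike.surjective hJ.conj R
    have hT : ∀ a, Commute T (π a) := by
      simpa only [IsConjugation.conj_conj] using (hJ.mem_envVN_iff hΩ).1 hR.1
    have hT' := (hJ.conj_mem_selfAdjointTwistedCenterBall_iff hΩ hV hT).1 hR
    beta_reduce
    rw [hJ.vectorFunctional_conj hV hT'.1]
    exact (hJ.twistedKMSDom_vectorFunctional_iff hΩ hω hV hT).2 hT'
  · obtain ⟨T, hT, rfl⟩ := exists_vectorFunctional_eq hΩ hω hρ.1.1 hρ.2.2
    have hT' := (hJ.twistedKMSDom_vectorFunctional_iff hΩ hω hV hT).1 hρ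
    exact ⟨hJ.conj T, (hJ.conj_mem_selfAdjointTwistedCenterBall_iff hΩ hV hT).2 hT',
      congrArg _ (hJ.vectorFunctional_conj hV hT'.1)⟩

end IsModularConjugation

end TwistedCenter

/-- Let `ω` be a `γ`-invariant `(α, β)`-KMS state with GNS triple
`(H, π, Ω)`, `M = π(A)''`, `J` the modular conjugation of `(M, Ω)` (characterized by
`J π(α_{iβ/2}(a)) Ω = π(a*) Ω` for entire analytic `a`), and `V` the canonical
implementation of the grading. Then the map `Ξ` sending `ρ ∈ F_β(A, α, γ, ω)` to the
unique `R_ρ ∈ M` with `ρ(a) = ⟨Ω, π(a) R_ρ Ω⟩` is a bijection onto the selfadjoint part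
of the unit ball of the `V`-twisted center `Z(M, V)`, and it preserves convex
combinations. -/
theorem twisted_kms_functionals_biject_twisted_center
    {A : Type*} [CStarAlgebra A]
    {Hs : Type*} [NormedAddCommGroup Hs] [InnerProductSpace ℂ Hs] [CompleteSpace Hs]
    (S : GradedDyn A) (β : ℝ) (ω : A → ℂ)
    (hω : S.toDynamics.IsKMS β ω) (hinv : ∀ a, ω (S.γ a) = ω a)
    (π : A →⋆ₐ[ℂ] (Hs →L[ℂ] Hs)) (Ω : Hs)
    (hcyc : Dense (Set.range fun a : A => π a Ω))
    (hrep : ∀ a : A, ω a = ⟪Ω, π a Ω⟫_ℂ)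
    -- the modular conjugation `J` of `(π(A)'', Ω)`:
    (J : Hs → Hs)
    (hJ_add : ∀ ξ η, J (ξ + η) = J ξ + J η)
    (hJ_smul : ∀ (z : ℂ) (ξ), J (z • ξ) = starRingEnd ℂ z • J ξ)
    (hJ_inner : ∀ ξ η, ⟪J ξ, J η⟫_ℂ = ⟪η, ξ⟫_ℂ)
    (hJ_invol : ∀ ξ, J (J ξ) = ξ)
    (hJ_Ω : J Ω = Ω)
    (hJ_mod : ∀ (a : A) (f : ℂ → A), S.toDynamics.IsAnalyticExt a f →
      J (π (f (Complex.I * β / 2)) Ω) = π (star a) Ω)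
    -- the canonical unitary implementation `V` of the grading:
    (V : Hs →L[ℂ] Hs)
    (hV_invol : ∀ ξ, V (V ξ) = ξ)
    (hV_Ω : V Ω = Ω)
    (hV_impl : ∀ (a : A) (ξ), V (π a (V ξ)) = π (S.γ a) ξ) :
    ∃ Ξ : (A → ℂ) → (Hs →L[ℂ] Hs),
      (∀ ρ ∈ {ρ : A → ℂ | TwistedKMSDom S.toDynamics S.γ β ω ρ},
        (Ξ ρ ∈ envVN π ∧ ∀ a : A, ρ a = ⟪Ω, π a (Ξ ρ Ω)⟫_ℂ) ∧
        ∀ R ∈ envVN π, (∀ a : A, ρ a = ⟪Ω, π a (R Ω)⟫_ℂ) → R = Ξ ρ) ∧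
      Set.BijOn Ξ
        {ρ : A → ℂ | TwistedKMSDom S.toDynamics S.γ β ω ρ}
        {R : Hs →L[ℂ] Hs | R ∈ envVN π ∧ (∀ ξ, J (star R (J ξ)) = R (V ξ)) ∧
          star R = R ∧ ‖R‖ ≤ 1} ∧
      ∀ ρ₁ ∈ {ρ : A → ℂ | TwistedKMSDom S.toDynamics S.γ β ω ρ},
        ∀ ρ₂ ∈ {ρ : A → ℂ | TwistedKMSDom S.toDynamics S.γ β ω ρ},
        ∀ t : ℝ, 0 ≤ t → t ≤ 1 →
          Ξ (fun a => (t : ℂ) * ρ₁ a + (1 - (t : ℂ)) * ρ₂ a) =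
            (t : ℂ) • Ξ ρ₁ + (1 - (t : ℂ)) • Ξ ρ₂ := by
  have hJ : IsModularConjugation S.toDynamics β π Ω J :=
    ⟨⟨hJ_add, hJ_smul, hJ_inner, hJ_invol⟩, hJ_mod⟩
  have hbij := hJ.bijOn_vectorFunctional hcyc hrep
    (IsImplementation.mk hV_invol hV_Ω hV_impl)
  let Ξ := Function.invFunOn (fun R => ⇑(vectorFunctional π Ω R))
    (selfAdjointTwistedCenterBall π J V)
  have hinvOn : Set.InvOn Ξ _ _ _ := hbij.invOn_invFunOn
  have hΞ : Set.BijOn Ξ _ _ := hbij.symm hinvOn.symm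
  have hΞ_apply {ρ} (hρ : TwistedKMSDom S.toDynamics S.γ β ω ρ) (a : A) :
      vectorFunctional π Ω (Ξ ρ) a = ρ a := congrFun (hinvOn.2 hρ) a
  refine ⟨Ξ, fun ρ hρ => ⟨⟨(hΞ.mapsTo hρ).1, fun a => (hΞ_apply hρ a).symm⟩, ?_⟩, hΞ, ?_⟩
  · exact fun R hR hRρ => hJ.injOn_vectorFunctional hcyc hR (hΞ.mapsTo hρ).1
      (funext fun a => (hRρ a).symm.trans (hΞ_apply hρ a).symm)
  · intro ρ₁ hρ₁ ρ₂ hρ₂ t ht0 ht1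
    have hmem := convex_selfAdjointTwistedCenterBall hJ.toIsConjugation (hΞ.mapsTo hρ₁)
      (hΞ.mapsTo hρ₂) ht0 (sub_nonneg.2 ht1) (add_sub_cancel t 1)
    rw [← Complex.coe_smul, ← Complex.coe_smul, Complex.ofReal_sub, Complex.ofReal_one] at hmem
    rw [← hinvOn.1 hmem]
    exact congrArg Ξ (funext fun a => by simp only [vectorFunctional_add, vectorFunctional_smul,
      add_apply, smul_apply, hΞ_apply hρ₁, hΞ_apply hρ₂, smul_eq_mul])

end
end
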